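/- arXiv:1603.00780 — 5 statements merged into one kernel-verified Lean document; each statement's English description precedes it below -/
import Mathlib

section
/- Let R be a commutative ring in which 2 and 3 are invertible, and let L be a 5-graded Lie algebra over R. Then for every σ ∈ {1,−1}, all x,y ∈ L_σ and all s,t ∈ L_{2σ}, one has e_σ(x,s) ∘ e_σ(y,t) = e_σ(x+y, s+t+(1/2)⁅x,y⁆) as R-linear endomorphisms of L, and e_σ(x,s) ∘ e_σ(−x,−s) = id_L; in particular every e_σ(x,s) is an invertible endomorphism with inverse e_σ(−x,−s). -/
/-- The exponential-type endomorphism `e(v) := Σ_{i=0}^{4} (1/i!)·(ad v)^i` of a Lie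
algebra over a commutative ring in which `2` and `3` are invertible.  (Note that
`1/2 = ⅟2`, `1/3! = ⅟2·⅟3` and `1/4! = ⅟2·⅟2·⅟2·⅟3`.) -/
noncomputable def eMap (R : Type*) {L : Type*} [CommRing R] [LieRing L] [LieAlgebra R L]
    [Invertible (2 : R)] [Invertible (3 : R)] (v : L) : Module.End R L :=
  1 + (LieAlgebra.ad R L v) + ⅟(2:R) • (LieAlgebra.ad R L v) ^ 2
    + (⅟(2:R) * ⅟(3:R)) • (LieAlgebra.ad R L v) ^ 3
    + (⅟(2:R) * ⅟(2:R) * ⅟(2:R) * ⅟(3:R)) • (LieAlgebra.ad R L v) ^ 4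

/-!
Elements `v`, `w` of the 2-step nilpotent subalgebra `L_σ + L_{2σ}` satisfy the
Baker–Campbell–Hausdorff formula in its short form `v + w + ½⁅v, w⁆`, because their bracket lies in
`L_{2σ}` and commutes with both. For operators `a`, `b` commuting with `⁅a, b⁆`, the normally ordered
binomial powers `Nₙ = ∑ n.choose i • aⁱ bⁿ⁻ⁱ` satisfy the Hermite recurrence
`Nₙ₊₂ = (a + b) Nₙ₊₁ + (n + 1) ⁅a, b⁆ Nₙ`, which makes `∑ Nₙ / n!` both `exp a * exp b` and
`exp (a + b + ½⁅a, b⁆)`. With `a = ad v` and `b = ad w` of weight `1` and `⁅a, b⁆` of weight `2`,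
every product of weight at least `5` shifts the grading out of `[-2, 2]` and vanishes, so the
identity holds for the exponentials truncated in degree `4`.
-/

section NormalOrderedPow

variable {A : Type*} [Ring A]

/-- The normally ordered binomial power `∑ i, n.choose i • (a ^ i * b ^ (n - i))`, with all powers
of `a` to the left of those of `b`, defined by Pascal's rule. Divided by `n !` it is the part of
total degree `n` of the product of the exponential series of `a` and `b`. -/
def normalOrderedPow (a b : A) : ℕ → A
  | 0 => 1
  | n + 1 => a * normalOrderedPow a b n + normalOrderedPow a b n * b

variable {a b : A}

theorem normalOrderedPow_zero : normalOrderedPow a b 0 = 1 := rfl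

theorem normalOrderedPow_succ (n : ℕ) :
    normalOrderedPow a b (n + 1) = a * normalOrderedPow a b n + normalOrderedPow a b n * b := rfl

theorem normalOrderedPow_one : normalOrderedPow a b 1 = a + b := by
  rw [normalOrderedPow_succ, normalOrderedPow_zero, mul_one, one_mul]

theorem normalOrderedPow_succ_lie_right (h : Commute a ⁅a, b⁆) (n : ℕ) :
    ⁅normalOrderedPow a b (n + 1), b⁆ = (n + 1) • (⁅a, b⁆ * normalOrderedPow a b n) := by
  induction n with
  | zero => simp [normalOrderedPow_one, normalOrderedPow_zero, Ring.lie_def, add_mul, mul_add]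
  | succ n ih =>
    set p := normalOrderedPow a b n
    set q := normalOrderedPow a b (n + 1) with hq
    calc ⁅a * q + q * b, b⁆ = ⁅a, b⁆ * q + (a * ⁅q, b⁆ + ⁅q, b⁆ * b) := by
          simp only [Ring.lie_def]
          noncomm_ring
      _ = ⁅a, b⁆ * q + (n + 1) • (⁅a, b⁆ * (a * p + p * b)) := by
          rw [ih, mul_smul_comm, smul_mul_assoc, ← smul_add, ← mul_assoc a, h.eq, mul_assoc,
            mul_assoc, ← mul_add]
      _ = (n + 1 + 1) • (⁅a, b⁆ * q) := by
          rw [succ_nsmul' _ (n + 1), hq, normalOrderedPow_succ]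

theorem normalOrderedPow_add_two (h : Commute a ⁅a, b⁆) (n : ℕ) :
    normalOrderedPow a b (n + 2) =
      (a + b) * normalOrderedPow a b (n + 1) + (n + 1) • (⁅a, b⁆ * normalOrderedPow a b n) := by
  rw [← normalOrderedPow_succ_lie_right h, normalOrderedPow_succ (n + 1), Ring.lie_def]
  noncomm_ring

theorem normalOrderedPow_two (h : Commute a ⁅a, b⁆) :
    normalOrderedPow a b 2 = (a + b) ^ 2 + ⁅a, b⁆ := by
  rw [normalOrderedPow_add_two h, normalOrderedPow_one, normalOrderedPow_zero]
  noncomm_ring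

theorem normalOrderedPow_three (ha : Commute a ⁅a, b⁆) (hb : Commute b ⁅a, b⁆) :
    normalOrderedPow a b 3 = (a + b) ^ 3 + 3 • ((a + b) * ⁅a, b⁆) := by
  rw [normalOrderedPow_add_two ha, normalOrderedPow_two ha, normalOrderedPow_one,
    ← (ha.add_left hb).eq]
  noncomm_ring

theorem normalOrderedPow_four (ha : Commute a ⁅a, b⁆) (hb : Commute b ⁅a, b⁆) :
    normalOrderedPow a b 4 =
      (a + b) ^ 4 + 6 • ((a + b) ^ 2 * ⁅a, b⁆) + 3 • ⁅a, b⁆ ^ 2 := by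
  rw [normalOrderedPow_add_two ha, normalOrderedPow_three ha hb, normalOrderedPow_two ha,
    mul_add ⁅a, b⁆, ← ((ha.add_left hb).pow_left 2).eq]
  noncomm_ring

end NormalOrderedPow

section ExpSum

theorem factorial_four_smul_cancel (R : Type*) {M : Type*} [CommRing R] [Invertible (2 : R)]
    [Invertible (3 : R)] [AddCommGroup M] [Module R M] {x y : M} (h : 24 • x = 24 • y) : x = y := by
  have h2 : IsUnit (2 : R) := isUnit_of_invertible 2
  have h3 : IsUnit (3 : R) := isUnit_of_invertible 3
  have h24 : IsUnit (24 : R) := by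
    convert ((h2.mul h2).mul h2).mul h3
    norm_num
  rwa [← ofNat_smul_eq_nsmul R 24, ← ofNat_smul_eq_nsmul R 24, h24.smul_left_cancel] at h

variable (R : Type*) [CommRing R] [Invertible (2 : R)] [Invertible (3 : R)]

section Module

variable {M : Type*} [AddCommGroup M] [Module R M]

/-- The truncated exponential sum `∑ n ≤ 4, p n / n !` of a sequence `p`. Taking a sequence rather
than the powers of one element as argument covers exponentials and their products alike. -/
def expSum (p : ℕ → M) : M :=
  p 0 + p 1 + ⅟(2 : R) • p 2 + (⅟(2 : R) * ⅟(3 : R)) • p 3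
    + (⅟(2 : R) * ⅟(2 : R) * ⅟(2 : R) * ⅟(3 : R)) • p 4

theorem factorial_four_smul_expSum (p : ℕ → M) :
    24 • expSum R p = 24 • p 0 + 24 • p 1 + 12 • p 2 + 4 • p 3 + p 4 := by
  have h2 : (2 : R) * ⅟(2 : R) = 1 := mul_invOf_self _
  have h3 : (3 : R) * ⅟(3 : R) = 1 := mul_invOf_self _
  have h6 : (6 : R) * (⅟(2 : R) * ⅟(3 : R)) = 1 := by linear_combination 3 * ⅟(3 : R) * h2 + h3
  have h8 : (8 : R) * (⅟(2 : R) * ⅟(2 : R) * ⅟(2 : R)) = 1 := by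
    linear_combination (4 * ⅟(2 : R) ^ 2 + 2 * ⅟(2 : R) + 1) * h2
  unfold expSum
  match_scalars
  · ring
  · ring
  · linear_combination 12 * h2
  · linear_combination 4 * h6
  · linear_combination 3 * ⅟(3 : R) * h8 + h3

end Module

variable {A : Type*} [Ring A] [Algebra R A] {a b c d : A}

theorem expSum_pow_mul_expSum_pow_eq_normalOrderedPow
    (h : ∀ i j, 5 ≤ i + j → a ^ i * b ^ j = 0) :
    expSum R (a ^ ·) * expSum R (b ^ ·) = expSum R (normalOrderedPow a b) := by
  refine factorial_four_smul_cancel R (factorial_four_smul_cancel R ?_)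
  calc 24 • 24 • (expSum R (a ^ ·) * expSum R (b ^ ·))
      = (24 • expSum R (a ^ ·)) * (24 • expSum R (b ^ ·)) := by
        rw [smul_mul_smul_comm, smul_smul]
    _ = 24 • 24 • expSum R (normalOrderedPow a b) := by
        simp only [factorial_four_smul_expSum, mul_add, add_mul, smul_mul_assoc, mul_smul_comm, h,
          Nat.reduceAdd, Nat.reduceLeDiff, smul_zero, add_zero, normalOrderedPow]
        noncomm_ring

theorem factorial_four_smul_expSum_add_pow (hdc : Commute d c)
    (h : ∀ i j, 5 ≤ i + 2 * j → d ^ i * c ^ j = 0) :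
    24 • expSum R ((d + c) ^ ·) = 24 • 1 + 24 • d + 12 • (d ^ 2 + 2 • c)
      + 4 • (d ^ 3 + 6 • (d * c)) + (d ^ 4 + 12 • (d ^ 2 * c) + 12 • c ^ 2) := by
  have hpow (n : ℕ) :
      (d + c) ^ n = ∑ m ∈ Finset.range (n + 1), n.choose m • (d ^ m * c ^ (n - m)) := by
    simp only [hdc.add_pow, nsmul_eq_mul']
  simp only [factorial_four_smul_expSum, hpow, Finset.sum_range_succ, Finset.sum_range_zero, h,
    Nat.reduceAdd, Nat.reduceSub, Nat.reduceMul, Nat.reduceLeDiff, Nat.choose]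
  noncomm_ring

theorem expSum_pow_mul_expSum_pow (hc : ⁅a, b⁆ = 2 • c) (ha : Commute a c) (hb : Commute b c)
    (hab : ∀ i j, 5 ≤ i + j → a ^ i * b ^ j = 0)
    (habc : ∀ i j, 5 ≤ i + 2 * j → (a + b) ^ i * c ^ j = 0) :
    expSum R (a ^ ·) * expSum R (b ^ ·) = expSum R ((a + b + c) ^ ·) := by
  have ha' : Commute a ⁅a, b⁆ := hc ▸ ha.smul_right 2
  have hb' : Commute b ⁅a, b⁆ := hc ▸ hb.smul_right 2
  rw [expSum_pow_mul_expSum_pow_eq_normalOrderedPow R hab]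
  refine factorial_four_smul_cancel R ?_
  rw [factorial_four_smul_expSum_add_pow R (ha.add_left hb) habc, factorial_four_smul_expSum,
    normalOrderedPow_zero, normalOrderedPow_one, normalOrderedPow_two ha',
    normalOrderedPow_three ha' hb', normalOrderedPow_four ha' hb', hc, smul_pow]
  simp only [mul_smul_comm, smul_smul, Nat.reduceMul, Nat.reducePow]

end ExpSum

section Raising

variable {ι R M : Type*} [AddCommMonoid ι] [CommSemiring R] [AddCommMonoid M] [Module R M]

/-- The endomorphisms of weight at least `n` for a family `g` of submodules: those mapping each
`g i` into the sum of the `g (i + m • σ)` with `m ≥ n`. Allowing all larger weights makes room for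
inhomogeneous operators such as `ad (x + s)` with `x ∈ g σ` and `s ∈ g (2 • σ)`. -/
def raisingEnd (g : ι → Submodule R M) (σ : ι) (n : ℕ) : Submodule R (Module.End R M) :=
  ⨅ i, Submodule.compatibleMaps (g i) (⨆ m ≥ n, g (i + m • σ))

variable {g : ι → Submodule R M} {σ : ι} {n : ℕ}

theorem mem_raisingEnd {f : Module.End R M} :
    f ∈ raisingEnd g σ n ↔ ∀ i, ∀ w ∈ g i, f w ∈ ⨆ m ≥ n, g (i + m • σ) := by
  simp only [raisingEnd, Submodule.mem_iInf]
  rfl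

theorem mem_iSup_shift {m : ℕ} (hm : n ≤ m) {i : ι} {w : M} (hw : w ∈ g (i + m • σ)) :
    w ∈ ⨆ k ≥ n, g (i + k • σ) :=
  Submodule.mem_iSup_of_mem m (Submodule.mem_iSup_of_mem hm hw)

theorem raisingEnd_antitone : Antitone (raisingEnd g σ) := fun _ _ hmn _ hf =>
  mem_raisingEnd.2 fun i w hw =>
    (iSup₂_le fun _ hk _ hu => mem_iSup_shift (hmn.trans hk) hu :
      _ ≤ ⨆ k ≥ _, g (i + k • σ)) (mem_raisingEnd.1 hf i w hw)

instance raisingEnd.gradedMonoid : SetLike.GradedMonoid (raisingEnd g σ) where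
  one_mem := mem_raisingEnd.2 fun i w hw =>
    mem_iSup_shift le_rfl (by simpa using hw)
  mul_mem m n f h hf hh := mem_raisingEnd.2 fun i w hw => by
    suffices hmap : ⨆ k ≥ n, g (i + k • σ) ≤ (⨆ k ≥ m + n, g (i + k • σ)).comap f from
      hmap (mem_raisingEnd.1 hh i w hw)
    refine iSup₂_le fun k hk u hu => ?_
    have hshift : ⨆ l ≥ m, g (i + k • σ + l • σ) ≤ ⨆ k ≥ m + n, g (i + k • σ) :=
      iSup₂_le fun l hl v hv =>
        mem_iSup_shift (by omega : m + n ≤ k + l) (by rwa [add_nsmul, ← add_assoc])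
    exact hshift (mem_raisingEnd.1 hf _ u hu)

theorem raisingEnd_eq_bot (hg : ⨆ i, g i = ⊤) (h : ∀ i, ∀ m ≥ n, g i = ⊥ ∨ g (i + m • σ) = ⊥) :
    raisingEnd g σ n = ⊥ := by
  refine eq_bot_iff.2 fun f hf => ?_
  have hker : ⨆ i, g i ≤ LinearMap.ker f := iSup_le fun i w hw => by
    by_cases hi : g i = ⊥
    · rw [hi, Submodule.mem_bot] at hw
      simp [hw]
    · have hfw := mem_raisingEnd.1 hf i w hw
      rwa [iSup₂_eq_bot.2 fun m hm => (h i m hm).resolve_left hi] at hfw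
  rw [hg, top_le_iff, LinearMap.ker_eq_top] at hker
  exact hker

end Raising

section FiveGrading

variable {R M : Type*} [CommSemiring R] [AddCommMonoid M] [Module R M]
  {g : ℤ → Submodule R M} {σ : ℤ}

theorem raisingEnd_eq_bot_of_five_le (hsup : ⨆ i, g i = ⊤) (hbound : ∀ i : ℤ, 2 < |i| → g i = ⊥)
    (hσ : σ ≠ 0) {n : ℕ} (hn : 5 ≤ n) : raisingEnd g σ n = ⊥ := by
  refine raisingEnd_eq_bot hsup fun i m hm => or_iff_not_imp_left.2 fun hi => hbound _ ?_
  have hi' : |i| ≤ 2 := not_lt.1 (mt (hbound i) hi)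
  have hmσ : 5 ≤ |m • σ| := by
    rw [nsmul_eq_mul, abs_mul, Nat.abs_cast]
    nlinarith [Int.one_le_abs hσ]
  have htriangle : |m • σ| ≤ |i + m • σ| + |i| := by
    simpa using abs_sub (i + m • σ) i
  omega

end FiveGrading

section LieAlgebra

variable {R L : Type*} [CommRing R] [LieRing L] [LieAlgebra R L]

theorem ad_lie (v w : L) :
    LieAlgebra.ad R L ⁅v, w⁆ = ⁅LieAlgebra.ad R L v, LieAlgebra.ad R L w⁆ := by
  ext u
  simp only [Ring.lie_def, LieAlgebra.ad_apply, LinearMap.sub_apply, Module.End.mul_apply, lie_lie]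

theorem ad_mem_raisingEnd {ι : Type*} [AddCommMonoid ι] {g : ι → Submodule R L}
    (hbracket : ∀ i j : ι, ∀ x ∈ g i, ∀ y ∈ g j, ⁅x, y⁆ ∈ g (i + j)) {σ : ι} {n : ℕ} {x : L}
    (hx : x ∈ g (n • σ)) : LieAlgebra.ad R L x ∈ raisingEnd g σ n :=
  mem_raisingEnd.2 fun i w hw =>
    mem_iSup_shift le_rfl (add_comm (n • σ) i ▸ hbracket _ _ x hx w hw)

theorem lie_eq_zero_of_mem {g : ℤ → Submodule R L}
    (hbracket : ∀ i j : ℤ, ∀ x ∈ g i, ∀ y ∈ g j, ⁅x, y⁆ ∈ g (i + j))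
    (hbound : ∀ i : ℤ, 2 < |i| → g i = ⊥) {i j : ℤ} (hij : 2 < |i + j|) {x y : L}
    (hx : x ∈ g i) (hy : y ∈ g j) : ⁅x, y⁆ = 0 := by
  simpa only [hbound _ hij, Submodule.mem_bot] using hbracket i j x hx y hy

variable [Invertible (2 : R)] [Invertible (3 : R)]

theorem eMap_eq_expSum (v : L) : eMap R v = expSum R (LieAlgebra.ad R L v ^ ·) := by
  simp only [eMap, expSum, pow_zero, pow_one]

theorem eMap_zero : eMap R (0 : L) = 1 := by
  simp [eMap]

theorem eMap_mul_eMap_of_ad_mem {F : ℕ → Submodule R (Module.End R L)} [SetLike.GradedMonoid F]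
    (hF : ∀ n ≥ 5, F n = ⊥) {v w : L} (hv : LieAlgebra.ad R L v ∈ F 1)
    (hw : LieAlgebra.ad R L w ∈ F 1) (hvw : LieAlgebra.ad R L ⁅v, w⁆ ∈ F 2)
    (hlv : ⁅v, ⁅v, w⁆⁆ = 0) (hlw : ⁅w, ⁅v, w⁆⁆ = 0) :
    eMap R v * eMap R w = eMap R (v + w + ⅟(2 : R) • ⁅v, w⁆) := by
  have hcomm {u : L} (hu : ⁅u, ⁅v, w⁆⁆ = 0) :
      Commute (LieAlgebra.ad R L u) (LieAlgebra.ad R L (⅟(2 : R) • ⁅v, w⁆)) := by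
    rw [commute_iff_lie_eq, ← ad_lie, lie_smul, hu, smul_zero, map_zero]
  have hzero {n : ℕ} {f : Module.End R L} (hf : f ∈ F n) (hn : 5 ≤ n) : f = 0 := by
    rwa [hF n hn, Submodule.mem_bot] at hf
  simp only [eMap_eq_expSum, map_add]
  refine expSum_pow_mul_expSum_pow R ?_ (hcomm hlv) (hcomm hlw) (fun i j hij => ?_)
    fun i j hij => ?_
  · rw [← ad_lie, ← map_nsmul, ← ofNat_smul_eq_nsmul R 2, smul_invOf_smul]
  · refine hzero (SetLike.mul_mem_graded (SetLike.pow_mem_graded i hv)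
      (SetLike.pow_mem_graded j hw)) ?_
    simpa using hij
  · rw [map_smul]
    refine hzero (SetLike.mul_mem_graded (SetLike.pow_mem_graded i (add_mem hv hw))
      (SetLike.pow_mem_graded j ((F 2).smul_mem _ hvw))) ?_
    simpa [mul_comm] using hij

variable {g : ℤ → Submodule R L} {σ : ℤ} {x y s t : L}

theorem eMap_add_mul_eMap_add (hsup : ⨆ i, g i = ⊤)
    (hbracket : ∀ i j : ℤ, ∀ x ∈ g i, ∀ y ∈ g j, ⁅x, y⁆ ∈ g (i + j))
    (hbound : ∀ i : ℤ, 2 < |i| → g i = ⊥) (hσ : σ ≠ 0)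
    (hx : x ∈ g σ) (hy : y ∈ g σ) (hs : s ∈ g (2 * σ)) (ht : t ∈ g (2 * σ)) :
    eMap R (x + s) * eMap R (y + t) = eMap R ((x + y) + (s + t + ⅟(2 : R) • ⁅x, y⁆)) := by
  have hxy : ⁅x, y⁆ ∈ g (2 * σ) := two_mul σ ▸ hbracket σ σ x hx y hy
  have had {u v : L} (hu : u ∈ g σ) (hv : v ∈ g (2 * σ)) :
      LieAlgebra.ad R L (u + v) ∈ raisingEnd g σ 1 := by
    rw [map_add]
    exact add_mem (ad_mem_raisingEnd hbracket (by simpa using hu))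
      (raisingEnd_antitone one_le_two (ad_mem_raisingEnd hbracket (by simpa using hv)))
  have h3 : 2 < |σ + 2 * σ| := by grind
  have h4 : 2 < |2 * σ + 2 * σ| := by grind
  have hcentral {u v w : L} (hu : u ∈ g σ) (hv : v ∈ g (2 * σ)) (hw : w ∈ g (2 * σ)) :
      ⁅u + v, w⁆ = 0 := by
    rw [add_lie, lie_eq_zero_of_mem hbracket hbound h3 hu hw,
      lie_eq_zero_of_mem hbracket hbound h4 hv hw, add_zero]
  have hlie : ⁅x + s, y + t⁆ = ⁅x, y⁆ := by
    rw [lie_add, hcentral hx hs ht, add_zero, add_lie, ← lie_skew s y,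
      lie_eq_zero_of_mem hbracket hbound h3 hy hs, neg_zero, add_zero]
  have hmul := eMap_mul_eMap_of_ad_mem
    (fun n hn => raisingEnd_eq_bot_of_five_le hsup hbound hσ hn) (had hx hs) (had hy ht)
  rw [hlie] at hmul
  rw [hmul (ad_mem_raisingEnd hbracket (by simpa using hxy)) (hcentral hx hs hxy)
    (hcentral hy ht hxy), add_add_add_comm, add_assoc]

end LieAlgebra

theorem stmt0_general {R L : Type*} [CommRing R] [Invertible (2 : R)] [Invertible (3 : R)]
    [LieRing L] [LieAlgebra R L]
    (g : ℤ → Submodule R L)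
    (hsup : ⨆ i, g i = ⊤)
    (hbracket : ∀ i j : ℤ, ∀ x ∈ g i, ∀ y ∈ g j, ⁅x, y⁆ ∈ g (i + j))
    (hbound : ∀ i : ℤ, 2 < |i| → g i = ⊥)
    (σ : ℤ) (hσ : σ ≠ 0)
    (x y : L) (hx : x ∈ g σ) (hy : y ∈ g σ)
    (s t : L) (hs : s ∈ g (2 * σ)) (ht : t ∈ g (2 * σ)) :
    eMap R (x + s) * eMap R (y + t)
        = eMap R ((x + y) + (s + t + ⅟(2:R) • ⁅x, y⁆))
      ∧ eMap R (x + s) * eMap R (-x + -s) = 1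
      ∧ eMap R (-x + -s) * eMap R (x + s) = 1
      ∧ IsUnit (eMap R (x + s)) := by
  have hx' : -x ∈ g σ := neg_mem hx
  have hs' : -s ∈ g (2 * σ) := neg_mem hs
  have hright : eMap R (x + s) * eMap R (-x + -s) = 1 := by
    simp [eMap_add_mul_eMap_add hsup hbracket hbound hσ hx hx' hs hs', eMap_zero]
  have hleft : eMap R (-x + -s) * eMap R (x + s) = 1 := by
    simp [eMap_add_mul_eMap_add hsup hbracket hbound hσ hx' hx hs' hs, eMap_zero]
  exact ⟨eMap_add_mul_eMap_add hsup hbracket hbound hσ hx hy hs ht, hright, hleft,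
    ⟨⟨_, _, hright, hleft⟩, rfl⟩⟩

/-- Let `R` be a commutative ring in which 2 and 3 are invertible and let
`L` be a 5-graded Lie algebra over `R` (grading `g : ℤ → Submodule R L`, internal direct
sum, `⁅L_i, L_j⁆ ⊆ L_{i+j}` and `L_i = 0` for `|i| > 2`).  Then for every `σ ∈ {1,-1}`,
all `x, y ∈ L_σ` and `s, t ∈ L_{2σ}`, one has
`e_σ(x,s) ∘ e_σ(y,t) = e_σ(x+y, s+t+(1/2)⁅x,y⁆)` and
`e_σ(x,s) ∘ e_σ(-x,-s) = id`; in particular `e_σ(x,s)` is invertible with inverse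
`e_σ(-x,-s)`.  Here `e_σ(x,s) := eMap R (x + s)`. -/
theorem stmt0 {R L : Type*} [CommRing R] [Invertible (2 : R)] [Invertible (3 : R)]
    [LieRing L] [LieAlgebra R L]
    (g : ℤ → Submodule R L)
    (hinternal : DirectSum.IsInternal g)
    (hbracket : ∀ i j : ℤ, ∀ x ∈ g i, ∀ y ∈ g j, ⁅x, y⁆ ∈ g (i + j))
    (hbound : ∀ i : ℤ, 2 < |i| → g i = ⊥)
    (σ : ℤ) (hσ : σ = 1 ∨ σ = -1)
    (x y : L) (hx : x ∈ g σ) (hy : y ∈ g σ)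
    (s t : L) (hs : s ∈ g (2 * σ)) (ht : t ∈ g (2 * σ)) :
    eMap R (x + s) * eMap R (y + t)
        = eMap R ((x + y) + (s + t + ⅟(2:R) • ⁅x, y⁆))
      ∧ eMap R (x + s) * eMap R (-x + -s) = 1
      ∧ eMap R (-x + -s) * eMap R (x + s) = 1
      ∧ IsUnit (eMap R (x + s)) :=
  stmt0_general g hinternal.submodule_iSup_eq_top hbracket hbound σ (by omega) x y hx hy s t hs ht
end

section
/- Let R be a commutative ring in which 2 and 3 are invertible, and let L be a 5-graded Lie algebra over R admitting a grading derivation ζ ∈ L. Then e_σ(x,s)(ζ) = ζ − σ·x − 2σ·s for all σ ∈ {1,−1} and all (x,s) ∈ L_σ × L_{2σ}, and consequently the map (x,s) ↦ e_σ(x,s) from L_σ × L_{2σ} to End_R(L) is injective. -/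
/-!
If `x` and `s` commute and are eigenvectors of `ad ζ` with eigenvalues `a` and `b`, then
`ad (x + s)` sends `ζ` to `-(a • x + b • s)` and annihilates this element, so the exponential series
applied to `ζ` stops after its linear term. Its value `ζ - a • x - b • s` determines `a • x` and
`b • s` whenever `a - b` is a unit, because the two eigenspaces are then disjoint.
-/

theorem disjoint_eigenspace_of_isUnit_sub {R M : Type*} [CommRing R] [AddCommGroup M] [Module R M]
    {f : Module.End R M} {a b : R} (hab : IsUnit (a - b)) :
    Disjoint (f.eigenspace a) (f.eigenspace b) := by
  refine Submodule.disjoint_def.2 fun x hxa hxb ↦ ?_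
  rw [Module.End.mem_eigenspace_iff] at hxa hxb
  rw [← hab.smul_eq_zero, sub_smul, ← hxa, ← hxb, sub_self]

theorem eq_and_eq_of_disjoint_of_add_eq_add {R M : Type*} [Ring R] [AddCommGroup M] [Module R M]
    {p q : Submodule R M} (hpq : Disjoint p q)
    {x x' y y' : M} (hx : x ∈ p) (hx' : x' ∈ p) (hy : y ∈ q) (hy' : y' ∈ q)
    (h : x + y = x' + y') : x = x' ∧ y = y' := by
  have hpq' : Disjoint p.toAddSubgroup q.toAddSubgroup :=
    AddSubgroup.disjoint_def.2 (Submodule.disjoint_def.1 hpq _ · ·)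
  simpa using AddSubgroup.add_injective_of_disjoint hpq'
    (a₁ := (⟨x, hx⟩, ⟨y, hy⟩)) (a₂ := (⟨x', hx'⟩, ⟨y', hy'⟩)) h

section LieAlgebra

variable {R L : Type*} [CommRing R] [Invertible (2 : R)] [Invertible (3 : R)]
  [LieRing L] [LieAlgebra R L]

theorem eMap_apply_of_lie_lie_eq_zero {v w : L} (h : ⁅v, ⁅v, w⁆⁆ = 0) :
    eMap R v w = w + ⁅v, w⁆ := by
  simp [eMap, pow_succ, h]

theorem eMap_add_apply_of_mem_eigenspace {ζ x s : L} {a b : R}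
    (hx : x ∈ (LieAlgebra.ad R L ζ).eigenspace a) (hs : s ∈ (LieAlgebra.ad R L ζ).eigenspace b)
    (hxs : ⁅x, s⁆ = 0) : eMap R (x + s) ζ = ζ - (a • x + b • s) := by
  rw [Module.End.mem_eigenspace_iff, LieAlgebra.ad_apply] at hx hs
  have hsx : ⁅s, x⁆ = 0 := by rw [← lie_skew, hxs, neg_zero]
  have hζ : ⁅x + s, ζ⁆ = -(a • x + b • s) := by rw [← lie_skew, lie_add, hx, hs]
  have hζ₂ : ⁅x + s, ⁅x + s, ζ⁆⁆ = 0 := by simp [hζ, hxs, hsx]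
  rw [eMap_apply_of_lie_lie_eq_zero hζ₂, hζ, sub_eq_add_neg]

theorem eq_and_eq_of_eMap_add_eq_eMap_add {ζ x x' s s' : L} {a b : R}
    (ha : IsUnit a) (hb : IsUnit b) (hab : IsUnit (a - b))
    (hx : x ∈ (LieAlgebra.ad R L ζ).eigenspace a) (hx' : x' ∈ (LieAlgebra.ad R L ζ).eigenspace a)
    (hs : s ∈ (LieAlgebra.ad R L ζ).eigenspace b) (hs' : s' ∈ (LieAlgebra.ad R L ζ).eigenspace b)
    (hxs : ⁅x, s⁆ = 0) (hxs' : ⁅x', s'⁆ = 0) (h : eMap R (x + s) = eMap R (x' + s')) :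
    x = x' ∧ s = s' := by
  have hsum : a • x + b • s = a • x' + b • s' := by
    have hζ := LinearMap.congr_fun h ζ
    rwa [eMap_add_apply_of_mem_eigenspace hx hs hxs, eMap_add_apply_of_mem_eigenspace hx' hs' hxs',
      sub_right_inj] at hζ
  obtain ⟨hax, hbs⟩ := eq_and_eq_of_disjoint_of_add_eq_add (disjoint_eigenspace_of_isUnit_sub hab)
    (Submodule.smul_mem _ a hx) (Submodule.smul_mem _ a hx')
    (Submodule.smul_mem _ b hs) (Submodule.smul_mem _ b hs') hsum
  exact ⟨ha.smul_left_cancel.1 hax, hb.smul_left_cancel.1 hbs⟩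

theorem stmt1_general (g : ℤ → Submodule R L)
    (hbracket : ∀ i j : ℤ, ∀ x ∈ g i, ∀ y ∈ g j, ⁅x, y⁆ ∈ g (i + j))
    (ζ : L) (hζ : ∀ i : ℤ, ∀ v ∈ g i, ⁅ζ, v⁆ = i • v)
    (σ : ℤ) (hσ : IsUnit (σ : R)) (h3σ : g (σ + 2 * σ) = ⊥) :
    (∀ x ∈ g σ, ∀ s ∈ g (2 * σ),
        eMap R (x + s) ζ = ζ - σ • x - (2 * σ) • s)
    ∧ (∀ x ∈ g σ, ∀ x' ∈ g σ, ∀ s ∈ g (2 * σ), ∀ s' ∈ g (2 * σ),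
        eMap R (x + s) = eMap R (x' + s') → x = x' ∧ s = s') := by
  have hcomm : ∀ x ∈ g σ, ∀ s ∈ g (2 * σ), ⁅x, s⁆ = 0 := fun x hx s hs ↦ by
    simpa [h3σ] using hbracket σ (2 * σ) x hx s hs
  have heigen : ∀ i : ℤ, g i ≤ (LieAlgebra.ad R L ζ).eigenspace (i : R) := fun i v hv ↦ by
    rw [Module.End.mem_eigenspace_iff, LieAlgebra.ad_apply, hζ i v hv, Int.cast_smul_eq_zsmul]
  have h2σ : IsUnit ((2 * σ : ℤ) : R) := by
    simpa only [Int.cast_mul, Int.cast_ofNat] using (isUnit_of_invertible (2 : R)).mul hσ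
  have hsub : IsUnit ((σ : R) - (2 * σ : ℤ)) := by
    rwa [← Int.cast_sub, show σ - 2 * σ = -σ by ring, Int.cast_neg, IsUnit.neg_iff]
  refine ⟨fun x hx s hs ↦ ?_, fun x hx x' hx' s hs s' hs' ↦ ?_⟩
  · rw [eMap_add_apply_of_mem_eigenspace (heigen _ hx) (heigen _ hs) (hcomm x hx s hs),
      Int.cast_smul_eq_zsmul, Int.cast_smul_eq_zsmul, sub_sub]
  · exact eq_and_eq_of_eMap_add_eq_eMap_add hσ h2σ hsub (heigen _ hx) (heigen _ hx')
      (heigen _ hs) (heigen _ hs') (hcomm x hx s hs) (hcomm x' hx' s' hs')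

end LieAlgebra

/-- Let `R` be a commutative ring in which 2 and 3 are invertible, and
let `L` be a 5-graded Lie algebra over `R` admitting a grading derivation `ζ ∈ L`
(i.e. `⁅ζ, v⁆ = i • v` for all `v ∈ L_i`).  Then `e_σ(x,s)(ζ) = ζ - σ•x - 2σ•s` for all
`σ ∈ {1,-1}` and `(x,s) ∈ L_σ × L_{2σ}`, and consequently the map
`(x,s) ↦ e_σ(x,s)` on `L_σ × L_{2σ}` is injective. -/
theorem stmt1 {R L : Type*} [CommRing R] [Invertible (2 : R)] [Invertible (3 : R)]
    [LieRing L] [LieAlgebra R L]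
    (g : ℤ → Submodule R L)
    (hinternal : DirectSum.IsInternal g)
    (hbracket : ∀ i j : ℤ, ∀ x ∈ g i, ∀ y ∈ g j, ⁅x, y⁆ ∈ g (i + j))
    (hbound : ∀ i : ℤ, 2 < |i| → g i = ⊥)
    (ζ : L) (hζ : ∀ i : ℤ, ∀ v ∈ g i, ⁅ζ, v⁆ = i • v)
    (σ : ℤ) (hσ : σ = 1 ∨ σ = -1) :
    (∀ x ∈ g σ, ∀ s ∈ g (2 * σ),
        eMap R (x + s) ζ = ζ - σ • x - (2 * σ) • s)
    ∧ (∀ x ∈ g σ, ∀ x' ∈ g σ, ∀ s ∈ g (2 * σ), ∀ s' ∈ g (2 * σ),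
        eMap R (x + s) = eMap R (x' + s') → x = x' ∧ s = s') := by
  exact stmt1_general g hbracket ζ hζ σ ((Int.isUnit_iff.2 hσ).map (Int.castRingHom R))
    (hbound _ (by rcases hσ with rfl | rfl <;> norm_num))
end

section
/- Let k be a field with char(k) ≠ 2 and char(k) ≠ 3, and let L be a finite-dimensional 5-graded Lie algebra over k. If moreover char(k) ≠ 5 or L_2 = L_{−2} = 0, then L is algebraic; that is, for every σ ∈ {1,−1} and every x ∈ L_σ, s ∈ L_{2σ}, the linear map e_σ(x,s) is a Lie algebra automorphism of L: it is bijective and satisfies e_σ(x,s)(⁅a,b⁆) = ⁅e_σ(x,s)(a), e_σ(x,s)(b)⁆ for all a,b ∈ L. -/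
/-! Divide the Leibniz rule `Dⁿ⁅a, b⁆ = ∑ (n choose i) ⁅Dⁱ a, Dⁿ⁻ⁱ b⁆` for `D = ad v` by `n!`. If
this is possible for all `n`, summing over `n` shows that `e = ∑ Dⁿ / n!` satisfies
`e ⁅a, b⁆ = ⁅e a, e b⁆`. If `L` is concentrated in degrees `-d, …, d` and `v` has components of
positive degree only, then `D` raises degrees, so `Dⁿ = 0` for `n > 2d`, while `⁅Dⁱ a, Dʲ b⁆`
vanishes for `i + j > 3d`. Hence only the factorials up to `(3d)!` have to be cancelled. For `d = 2`
this is `6!`, whose only prime factor besides `2` and `3` is `5`; for `d = 1` it is `3!`. -/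

open Finset LieAlgebra
open scoped Nat

section DividedPowers

variable (R : Type*) {A : Type*} [CommSemiring R] [Semiring A] [Algebra R A]

/-- The divided power `aⁿ / n!`. It takes the junk value `0` when `n!` is not a unit of `R`, which
is still the intended value if `aⁿ = 0`. -/
noncomputable def divPow (a : A) (n : ℕ) : A := Ring.inverse (n ! : R) • a ^ n

/-- The exponential series of `a` truncated after degree `N`, for use when `N!` is a unit of `R`. -/
noncomputable def truncExp (N : ℕ) (a : A) : A := ∑ n ∈ range (N + 1), divPow R a n

variable {R}

theorem divPow_eq_zero {a : A} {n : ℕ} (h : a ^ n = 0) : divPow R a n = 0 := by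
  rw [divPow, h, smul_zero]

theorem factorial_nsmul_divPow {a : A} {n : ℕ} (h : IsUnit (n ! : R) ∨ a ^ n = 0) :
    n ! • divPow R a n = a ^ n := by
  obtain h | h := h
  · rw [divPow, ← Nat.cast_smul_eq_nsmul R, smul_smul, Ring.mul_inverse_cancel _ h, one_smul]
  · rw [divPow_eq_zero h, h, smul_zero]

theorem isUnit_truncExp {A : Type*} [Ring A] [Algebra R A] (N : ℕ) {a : A} (ha : IsNilpotent a) :
    IsUnit (truncExp R N a) := by
  have hcomm (i j : ℕ) : Commute (divPow R a i) (divPow R a j) :=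
    ((Commute.refl a).pow_pow i j).smul_left _ |>.smul_right _
  have hnil : IsNilpotent (∑ n ∈ range N, divPow R a (n + 1)) :=
    Commute.isNilpotent_sum (fun n _ => (ha.pow_succ n).smul _) fun i j _ _ => hcomm _ _
  rw [truncExp, sum_range_succ', add_comm]
  simpa [divPow] using hnil.isUnit_one_add

end DividedPowers

theorem isUnit_factorial_or_pow_eq_zero {R A : Type*} [CommSemiring R] [MonoidWithZero A]
    {a : A} {N : ℕ} (hN : IsUnit (N ! : R)) (ha : a ^ (N + 1) = 0) (n : ℕ) :
    IsUnit (n ! : R) ∨ a ^ n = 0 := by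
  obtain hn | hn := le_or_gt n N
  · exact .inl (isUnit_of_dvd_unit (Nat.cast_dvd_cast (Nat.factorial_dvd_factorial hn)) hN)
  · exact .inr (pow_eq_zero_of_le hn ha)

theorem sum_range_sum_antidiagonal_eq_sum_sum {M : Type*} [AddCommMonoid M] {N : ℕ} {f : ℕ → ℕ → M}
    (hleft : ∀ i j, N < i → f i j = 0) (hright : ∀ i j, N < j → f i j = 0) :
    ∑ n ∈ range (2 * N + 1), ∑ p ∈ antidiagonal n, f p.1 p.2 =
      ∑ i ∈ range (N + 1), ∑ j ∈ range (N + 1), f i j := by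
  rw [← sum_product', ← sum_fiberwise_of_maps_to (t := range (2 * N + 1))
    (g := fun p : ℕ × ℕ => p.1 + p.2)]
  · refine sum_congr rfl fun n _ => (sum_subset ?_ ?_).symm
    · intro p hp
      simpa using (mem_filter.1 hp).2
    · intro p hp hp'
      obtain h | h : N < p.1 ∨ N < p.2 := by
        simp only [HasAntidiagonal.mem_antidiagonal, mem_filter, mem_product, mem_range] at hp hp'
        omega
      exacts [hleft _ _ h, hright _ _ h]
  · intro p hp
    simp only [mem_product, mem_range] at hp ⊢
    omega

section Leibniz

open LieModule

variable {R L M : Type*} [CommRing R] [LieRing L] [LieAlgebra R L] [AddCommGroup M] [Module R M]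
  [LieRingModule L M] [LieModule R L M] {v : L}

theorem factorial_nsmul_lie_divPow_divPow (hL : ∀ n, IsUnit (n ! : R) ∨ ad R L v ^ n = 0)
    (hM : ∀ n, IsUnit (n ! : R) ∨ toEnd R L M v ^ n = 0) (i j : ℕ) (a : L) (m : M) :
    (i + j)! • ⁅divPow R (ad R L v) i a, divPow R (toEnd R L M v) j m⁆ =
      (i + j).choose i • ⁅(ad R L v ^ i) a, (toEnd R L M v ^ j) m⁆ := by
  rw [← factorial_nsmul_divPow (hL i), ← factorial_nsmul_divPow (hM j), LinearMap.smul_apply,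
    LinearMap.smul_apply, nsmul_lie, lie_nsmul, smul_smul, smul_smul,
    Nat.choose_symm_add, Nat.add_choose_mul_factorial_mul_factorial]

theorem divPow_toEnd_lie {K : ℕ} (hL : ∀ n, IsUnit (n ! : R) ∨ ad R L v ^ n = 0)
    (hM : ∀ n, IsUnit (n ! : R) ∨ toEnd R L M v ^ n = 0) (hreg : IsSMulRegular M K !)
    (hlie : ∀ i j, K < i + j → ∀ (a : L) (m : M), ⁅(ad R L v ^ i) a, (toEnd R L M v ^ j) m⁆ = 0)
    (n : ℕ) (a : L) (m : M) :
    divPow R (toEnd R L M v) n ⁅a, m⁆ =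
      ∑ p ∈ antidiagonal n, ⁅divPow R (ad R L v) p.1 a, divPow R (toEnd R L M v) p.2 m⁆ := by
  obtain hn | hn := le_or_gt n K
  · have hn_reg : IsSMulRegular M n ! := by
      obtain ⟨c, hc⟩ := Nat.factorial_dvd_factorial hn
      exact .of_mul (a := c) (by rwa [mul_comm, ← hc])
    apply hn_reg
    simp only
    rw [← LinearMap.smul_apply, factorial_nsmul_divPow (hM n), toEnd_pow_lie, smul_sum]
    refine sum_congr rfl fun p hp => ?_
    rw [← mem_antidiagonal.1 hp, factorial_nsmul_lie_divPow_divPow hL hM]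
  · have hK {p : ℕ × ℕ} (hp : p ∈ antidiagonal n) : K < p.1 + p.2 := by
      rwa [mem_antidiagonal.1 hp]
    rw [divPow, LinearMap.smul_apply, toEnd_pow_lie,
      sum_eq_zero fun p hp => by rw [hlie _ _ (hK hp), smul_zero], smul_zero,
      sum_eq_zero fun p hp => by
        simp only [divPow, LinearMap.smul_apply, smul_lie, lie_smul, hlie _ _ (hK hp), smul_zero]]

theorem truncExp_toEnd_lie {N K : ℕ} (hN : IsUnit (N ! : R)) (hL : ad R L v ^ (N + 1) = 0)
    (hM : toEnd R L M v ^ (N + 1) = 0) (hreg : IsSMulRegular M K !)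
    (hlie : ∀ i j, K < i + j → ∀ (a : L) (m : M), ⁅(ad R L v ^ i) a, (toEnd R L M v ^ j) m⁆ = 0)
    (a : L) (m : M) :
    truncExp R N (toEnd R L M v) ⁅a, m⁆ =
      ⁅truncExp R N (ad R L v) a, truncExp R N (toEnd R L M v) m⁆ := by
  have hL_zero {n : ℕ} (hn : N < n) : divPow R (ad R L v) n = 0 :=
    divPow_eq_zero (pow_eq_zero_of_le hn hL)
  have hM_zero {n : ℕ} (hn : N < n) : divPow R (toEnd R L M v) n = 0 :=
    divPow_eq_zero (pow_eq_zero_of_le hn hM)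
  calc
    truncExp R N (toEnd R L M v) ⁅a, m⁆
    _ = ∑ n ∈ range (2 * N + 1), divPow R (toEnd R L M v) n ⁅a, m⁆ := by
      rw [truncExp, LinearMap.sum_apply]
      refine sum_subset (range_subset_range.2 (by lia)) fun n _ hn => ?_
      rw [hM_zero (by simpa using hn), LinearMap.zero_apply]
    _ = ∑ n ∈ range (2 * N + 1), ∑ p ∈ antidiagonal n,
          ⁅divPow R (ad R L v) p.1 a, divPow R (toEnd R L M v) p.2 m⁆ :=
      sum_congr rfl fun n _ => divPow_toEnd_lie (isUnit_factorial_or_pow_eq_zero hN hL)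
        (isUnit_factorial_or_pow_eq_zero hN hM) hreg hlie n a m
    _ = ∑ i ∈ range (N + 1), ∑ j ∈ range (N + 1),
          ⁅divPow R (ad R L v) i a, divPow R (toEnd R L M v) j m⁆ :=
      sum_range_sum_antidiagonal_eq_sum_sum
        (f := fun i j => ⁅divPow R (ad R L v) i a, divPow R (toEnd R L M v) j m⁆)
        (fun i j hi => by rw [hL_zero hi, LinearMap.zero_apply, zero_lie])
        (fun i j hj => by rw [hM_zero hj, LinearMap.zero_apply, lie_zero])
    _ = ⁅truncExp R N (ad R L v) a, truncExp R N (toEnd R L M v) m⁆ := by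
      simp only [truncExp, LinearMap.sum_apply, sum_lie_sum]

end Leibniz

section Filtration

variable {R L : Type*} [CommRing R] [LieRing L] [LieAlgebra R L]

/-- The descending filtration of `L` by the sums `∑_{j ≥ i} g j` attached to a family of submodules,
such as the homogeneous components of a grading. -/
def upperFiltration {ι : Type*} [LE ι] (g : ι → Submodule R L) (i : ι) : Submodule R L :=
  ⨆ j ≥ i, g j

section Grading

variable {ι : Type*} {g : ι → Submodule R L}

theorem le_upperFiltration [LE ι] {i j : ι} (h : i ≤ j) : g j ≤ upperFiltration g i :=
  le_iSup₂_of_le j h le_rfl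

theorem upperFiltration_eq_bot [LE ι] {i : ι} (h : ∀ j ≥ i, g j = ⊥) : upperFiltration g i = ⊥ :=
  iSup₂_eq_bot.2 h

theorem upperFiltration_eq_top [LinearOrder ι] (hspan : ⨆ j, g j = ⊤) {i : ι}
    (h : ∀ j < i, g j = ⊥) : upperFiltration g i = ⊤ := by
  refine top_le_iff.1 (hspan ▸ iSup_le fun j => ?_)
  obtain hj | hj := lt_or_ge j i
  · exact (h j hj).trans_le bot_le
  · exact le_upperFiltration hj

instance gradedBracket_upperFiltration [Preorder ι] [Add ι] [AddLeftMono ι] [AddRightMono ι]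
    [SetLike.GradedBracket g] : SetLike.GradedBracket (upperFiltration g) where
  bracket_mem i j y z hy hz := by
    have hcomp {i' : ι} (hi : i ≤ i') {y : L} (hy : y ∈ g i') :
        upperFiltration g j ≤ (upperFiltration g (i + j)).comap (ad R L y) :=
      iSup₂_le fun j' hj z hz => le_upperFiltration (add_le_add hi hj)
        (SetLike.GradedBracket.bracket_mem hy hz)
    have hle : upperFiltration g i ≤ (upperFiltration g (i + j)).comap (ad R L z) :=
      iSup₂_le fun i' hi y hy => by
        rw [Submodule.mem_comap, ad_apply, ← lie_skew, neg_mem_iff]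
        exact hcomp hi hy hz
    rw [← lie_skew, neg_mem_iff]
    exact hle hy

end Grading

theorem add_mem_upperFiltration {g : ℤ → Submodule R L} {x s : L} (hx : x ∈ g 1) (hs : s ∈ g 2) :
    x + s ∈ upperFiltration g 1 :=
  add_mem (le_upperFiltration le_rfl hx) (le_upperFiltration one_le_two hs)

variable {F : ℤ → Submodule R L} [SetLike.GradedBracket F] {d : ℕ} {v : L}

theorem ad_pow_apply_mem (hv : v ∈ F 1) {n : ℤ} {a : L} (ha : a ∈ F n) (i : ℕ) :
    (ad R L v ^ i) a ∈ F (n + i) := by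
  induction i with
  | zero => simpa using ha
  | succ i ih =>
    rw [pow_succ', Module.End.mul_apply, ad_apply, Nat.cast_succ, ← add_assoc, add_comm]
    exact SetLike.GradedBracket.bracket_mem hv ih

theorem ad_pow_apply_mem_of_eq_top (htop : F (-d) = ⊤) (hv : v ∈ F 1) (i : ℕ) (a : L) :
    (ad R L v ^ i) a ∈ F (-d + i) :=
  ad_pow_apply_mem hv (htop ▸ Submodule.mem_top) i

theorem ad_pow_eq_zero (htop : F (-d) = ⊤) (hbot : ∀ n > (d : ℤ), F n = ⊥) (hv : v ∈ F 1) {n : ℕ}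
    (hn : 2 * d < n) : ad R L v ^ n = 0 := by
  refine LinearMap.ext fun a => ?_
  rw [LinearMap.zero_apply, ← Submodule.mem_bot R, ← hbot (-d + n) (by lia)]
  exact ad_pow_apply_mem_of_eq_top htop hv n a

theorem lie_ad_pow_ad_pow_eq_zero (htop : F (-d) = ⊤) (hbot : ∀ n > (d : ℤ), F n = ⊥)
    (hv : v ∈ F 1) {i j : ℕ} (hij : 3 * d < i + j) (a b : L) :
    ⁅(ad R L v ^ i) a, (ad R L v ^ j) b⁆ = 0 := by
  rw [← Submodule.mem_bot R, ← hbot (-d + i + (-d + j)) (by lia)]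
  exact SetLike.GradedBracket.bracket_mem (ad_pow_apply_mem_of_eq_top htop hv i a)
    (ad_pow_apply_mem_of_eq_top htop hv j b)

theorem truncExp_ad_lie (htop : F (-d) = ⊤) (hbot : ∀ n > (d : ℤ), F n = ⊥) (hv : v ∈ F 1) {N : ℕ}
    (hdN : 2 * d ≤ N) (hN : IsUnit (N ! : R)) (hreg : IsSMulRegular L (3 * d)!) (a b : L) :
    truncExp R N (ad R L v) ⁅a, b⁆ = ⁅truncExp R N (ad R L v) a, truncExp R N (ad R L v) b⁆ := by
  have hpow : ad R L v ^ (N + 1) = 0 := ad_pow_eq_zero htop hbot hv (Nat.lt_succ_of_le hdN)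
  exact truncExp_toEnd_lie hN hpow hpow hreg
    (fun i j hij => lie_ad_pow_ad_pow_eq_zero htop hbot hv hij) a b

end Filtration

section FiveGraded

variable {R L : Type*} [CommRing R] [LieRing L] [LieAlgebra R L] [Invertible (2 : R)]
  [Invertible (3 : R)]

theorem eMap_eq_truncExp (v : L) : eMap R v = truncExp R 4 (ad R L v) := by
  have h3 : Ring.inverse (3 ! : R) = ⅟2 * ⅟3 := by
    rw [show (3 ! : R) = 3 * 2 by norm_num [Nat.factorial], Ring.mul_inverse_rev]
    simp only [Ring.inverse_invertible]
  have h4 : Ring.inverse (4 ! : R) = ⅟2 * ⅟2 * ⅟2 * ⅟3 := by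
    rw [show (4 ! : R) = 3 * (2 * (2 * 2)) by norm_num [Nat.factorial]]
    simp only [Ring.mul_inverse_rev, Ring.inverse_invertible]
  simp [eMap, truncExp, divPow, sum_range_succ, h3, h4]

theorem bijective_eMap_and_eMap_lie {g : ℤ → Submodule R L} [SetLike.GradedBracket g]
    (hspan : ⨆ i, g i = ⊤) {d : ℕ} (hd : d ≤ 2) (hbound : ∀ i : ℤ, d < |i| → g i = ⊥)
    (hreg : IsSMulRegular L (3 * d)!) {v : L} (hv : v ∈ upperFiltration g 1) :
    Function.Bijective (eMap R v) ∧ ∀ a b : L, eMap R v ⁅a, b⁆ = ⁅eMap R v a, eMap R v b⁆ := by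
  have htop : upperFiltration g (-d) = ⊤ :=
    upperFiltration_eq_top hspan fun j hj => hbound j (lt_abs.2 (.inr (by lia)))
  have hbot (n : ℤ) (hn : n > d) : upperFiltration g n = ⊥ :=
    upperFiltration_eq_bot fun j hj => hbound j (lt_abs.2 (.inl (by lia)))
  have hunit : IsUnit (4 ! : R) := by
    rw [show (4 ! : R) = 3 * (2 * (2 * 2)) by norm_num [Nat.factorial]]
    simp only [IsUnit.mul_iff, isUnit_of_invertible, and_self]
  rw [eMap_eq_truncExp]
  have hnil : IsNilpotent (ad R L v) :=
    ⟨2 * d + 1, ad_pow_eq_zero htop hbot hv (Nat.lt_succ_self _)⟩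
  exact ⟨(Module.End.isUnit_iff _).1 (isUnit_truncExp 4 hnil),
    truncExp_ad_lie htop hbot hv (by lia) hunit hreg⟩

theorem bijective_eMap_add_and_eMap_add_lie {g : ℤ → Submodule R L} [SetLike.GradedBracket g]
    (hspan : ⨆ i, g i = ⊤) {d : ℕ} (hd : d ≤ 2) (hbound : ∀ i : ℤ, d < |i| → g i = ⊥)
    (hreg : IsSMulRegular L (3 * d)!) {σ : ℤ} (hσ : σ = 1 ∨ σ = -1) {x s : L} (hx : x ∈ g σ)
    (hs : s ∈ g (2 * σ)) :
    Function.Bijective (eMap R (x + s)) ∧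
      ∀ a b : L, eMap R (x + s) ⁅a, b⁆ = ⁅eMap R (x + s) a, eMap R (x + s) b⁆ := by
  have hunit : σ * σ = 1 := by obtain rfl | rfl := hσ <;> rfl
  have hsurj : Function.Surjective (σ * ·) := fun i => ⟨σ * i, by simp [← mul_assoc, hunit]⟩
  have habs : |σ| = 1 := by obtain rfl | rfl := hσ <;> rfl
  have : SetLike.GradedBracket fun j => g (σ * j) :=
    ⟨fun i j y z hy hz => mul_add σ i j ▸ SetLike.GradedBracket.bracket_mem hy hz⟩
  exact bijective_eMap_and_eMap_lie (g := fun j => g (σ * j)) (hsurj.iSup_comp g ▸ hspan) hd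
    (fun i hi => hbound _ (by rwa [abs_mul, habs, one_mul])) hreg
    (add_mem_upperFiltration (by rwa [mul_one]) (by rwa [mul_comm]))

theorem stmt2_general (g : ℤ → Submodule R L) (hspan : ⨆ i, g i = ⊤)
    (hbracket : ∀ i j : ℤ, ∀ x ∈ g i, ∀ y ∈ g j, ⁅x, y⁆ ∈ g (i + j))
    (hbound : ∀ i : ℤ, 2 < |i| → g i = ⊥)
    (hfive : IsSMulRegular L (5 : R) ∨ (g 2 = ⊥ ∧ g (-2) = ⊥)) :
    ∀ σ : ℤ, σ = 1 ∨ σ = -1 → ∀ x ∈ g σ, ∀ s ∈ g (2 * σ),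
      Function.Bijective (eMap R (x + s)) ∧
      ∀ a b : L, eMap R (x + s) ⁅a, b⁆ = ⁅eMap R (x + s) a, eMap R (x + s) b⁆ := by
  intro σ hσ x hx s hs
  have : SetLike.GradedBracket g := ⟨fun i j x y hx hy => hbracket i j x hx y hy⟩
  have htwo : IsSMulRegular L (2 : R) := (isUnit_of_invertible 2).isSMulRegular L
  have hthree : IsSMulRegular L (3 : R) := (isUnit_of_invertible 3).isSMulRegular L
  obtain hfive | ⟨hg, hg'⟩ := hfive
  · have hreg : IsSMulRegular L (3 * 2)! := by
      rw [← isSMulRegular_map (Nat.cast : ℕ → R) (Nat.cast_smul_eq_nsmul R _),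
        show ((3 * 2)! : R) = 2 ^ 4 * 3 ^ 2 * 5 by norm_num [Nat.factorial]]
      exact ((htwo.pow 4).mul (hthree.pow 2)).mul hfive
    exact bijective_eMap_add_and_eMap_add_lie hspan le_rfl hbound hreg hσ hx hs
  · have hbound_one (i : ℤ) (hi : 1 < |i|) : g i = ⊥ := by
      obtain hi | hi := (show 2 ≤ |i| from hi).lt_or_eq
      · exact hbound i hi
      · obtain rfl | rfl := (abs_eq zero_le_two).1 hi.symm
        exacts [hg, hg']
    have hreg : IsSMulRegular L (3 * 1)! := by
      rw [← isSMulRegular_map (Nat.cast : ℕ → R) (Nat.cast_smul_eq_nsmul R _),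
        show ((3 * 1)! : R) = 2 * 3 by norm_num [Nat.factorial]]
      exact htwo.mul hthree
    exact bijective_eMap_add_and_eMap_add_lie hspan one_le_two hbound_one hreg hσ hx hs

end FiveGraded

/-- Let `k` be a field with `char k ≠ 2, 3` (equivalently, `2` and `3`
are invertible in `k`) and let `L` be a finite-dimensional 5-graded Lie algebra over `k`.
If moreover `char k ≠ 5` (i.e. `(5:k) ≠ 0`) or `L_2 = L_{-2} = 0`, then `L` is algebraic:
for every `σ ∈ {1,-1}`, `x ∈ L_σ` and `s ∈ L_{2σ}`, the map `e_σ(x,s)` is a bijective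
Lie algebra endomorphism, i.e. a Lie algebra automorphism of `L`. -/
theorem stmt2 {k L : Type*} [Field k] [Invertible (2 : k)] [Invertible (3 : k)]
    [LieRing L] [LieAlgebra k L] [FiniteDimensional k L]
    (g : ℤ → Submodule k L)
    (hinternal : DirectSum.IsInternal g)
    (hbracket : ∀ i j : ℤ, ∀ x ∈ g i, ∀ y ∈ g j, ⁅x, y⁆ ∈ g (i + j))
    (hbound : ∀ i : ℤ, 2 < |i| → g i = ⊥)
    (hchar5 : (5 : k) ≠ 0 ∨ (g 2 = ⊥ ∧ g (-2) = ⊥)) :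
    ∀ σ : ℤ, σ = 1 ∨ σ = -1 → ∀ x ∈ g σ, ∀ s ∈ g (2 * σ),
      Function.Bijective (eMap k (x + s)) ∧
      ∀ a b : L, eMap k (x + s) ⁅a, b⁆ = ⁅eMap k (x + s) a, eMap k (x + s) b⁆ :=
  stmt2_general g hinternal.submodule_iSup_eq_top hbracket hbound <|
    hchar5.imp_left fun hfive => (isUnit_iff_ne_zero.2 hfive).isSMulRegular L
end

section
/- Let A be a structurable division algebra over a field k with char(k) ≠ 2 and char(k) ≠ 3. Then there is no skew element s ∈ S with s·s = 1. -/
/-- The triple product `{x,y,z} := (x·ȳ)·z + (z·ȳ)·x − (z·x̄)·y` of a (not necessarily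
associative or commutative) unital algebra `A` equipped with an involution `bar`. -/
def strTrip {A : Type*} [NonAssocRing A] (bar : A → A) (x y z : A) : A :=
  x * bar y * z + z * bar y * x - z * bar x * y

/-- `ψ(x,y) := x·ȳ − y·x̄`. -/
def strPsi {A : Type*} [NonAssocRing A] (bar : A → A) (x y : A) : A :=
  x * bar y - y * bar x

/-- `q_x(s) := (1/6)·ψ(x, U_x(s·x))`, where `U_x y := {x,y,x}`. -/
noncomputable def strQ (k : Type*) [Field k] {A : Type*} [NonAssocRing A] [Module k A]
    (bar : A → A) (x s : A) : A :=
  (6 : k)⁻¹ • strPsi bar x (strTrip bar x (s * x) x)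

/-- `(A, bar)` is a structurable algebra over `k`: `bar` is a `k`-linear involutive
anti-automorphism of `A`, and the operator identity
`[V_{x,y}, V_{z,w}] = V_{{x,y,z},w} − V_{z,{y,x,w}}` holds, where
`V_{x,y} z := strTrip bar x y z`. -/
def IsStructurable (k : Type*) [Field k] (A : Type*) [NonAssocRing A] [Module k A]
    (bar : A → A) : Prop :=
  (∀ x y : A, bar (x + y) = bar x + bar y) ∧
  (∀ (c : k) (x : A), bar (c • x) = c • bar x) ∧
  (∀ x y : A, bar (x * y) = bar y * bar x) ∧
  (∀ x : A, bar (bar x) = x) ∧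
  (∀ x y z w a : A,
    strTrip bar x y (strTrip bar z w a) - strTrip bar z w (strTrip bar x y a)
      = strTrip bar (strTrip bar x y z) w a - strTrip bar z (strTrip bar y x w) a)

/-- `A` is a (conjugate) division algebra: every nonzero `u ∈ A` has a conjugate
inverse `v`, i.e. `V_{u,v} = id`. -/
def IsConjDivision {A : Type*} [NonAssocRing A] (bar : A → A) : Prop :=
  ∀ u : A, u ≠ 0 → ∃ v : A, ∀ z : A, strTrip bar u v z = z

/-!
Put `u = 1 + s`, so that `ū = 1 - s` and `u·ū = 1 - s·s = 0`. When there is no 3-torsion, the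
operator identity forces a conjugate inverse `v` of `u` to satisfy `V_{v,u} = id` as well as
`V_{u,v} = id`. The key point is that skew elements are right alternative, `(x·s)·s = x·(s·s)`,
which gives `(v·ū)·u = 0`. Evaluating both operators at `u`, with `p = (u·v̄)·u`, then yields
`2p = u` and `-p = u`, whence `3u = 0`.

Right alternativity is the vanishing of the associator `[x,s,s]`. For `x` hermitian or skew,
evaluating commutators such as `[V_{x,1}, V_{1,s}]` turns the operator identity into linear
relations between associators of `x`, `s`, `s`, whose only solution is zero when there is neither
2-torsion nor 3-torsion.
-/

/-- The defining operator identity of structurable algebras,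
`[V_{x,y}, V_{z,w}] = V_{{x,y,z},w} - V_{z,{y,x,w}}`, for an arbitrary nonassociative ring with
involution; no field of scalars is involved. -/
def StructurableIdentity (A : Type*) [NonAssocRing A] [StarRing A] : Prop :=
  ∀ x y z w a : A,
    strTrip star x y (strTrip star z w a) - strTrip star z w (strTrip star x y a)
      = strTrip star (strTrip star x y z) w a - strTrip star z (strTrip star y x w) a

/-- `v` is a conjugate inverse of `u`, that is, `V_{u,v} = id`. -/
def IsConjInverse {A : Type*} [NonAssocRing A] [StarRing A] (u v : A) : Prop :=
  ∀ z : A, strTrip star u v z = z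

/-- The involution of a structurable algebra, bundled so that the `star` library applies. -/
abbrev IsStructurable.starRing {k A : Type*} [Field k] [NonAssocRing A] [Module k A]
    {bar : A → A} (h : IsStructurable k A bar) : StarRing A where
  star := bar
  star_involutive := h.2.2.2.1
  star_mul := h.2.2.1
  star_add := h.1

theorem isSMulRegular_of_natCast_ne_zero (k : Type*) {M : Type*} [Field k] [AddCommGroup M]
    [Module k M] {n : ℕ} (hn : (n : k) ≠ 0) : IsSMulRegular M n :=
  (isSMulRegular_map (Nat.cast : ℕ → k) (Nat.cast_smul_eq_nsmul k n)).1 (.of_ne_zero hn)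

section StarRing

variable {A : Type*} [NonAssocRing A] [StarRing A] {h r s u v : A}

theorem star_associator (x y z : A) :
    star (associator x y z) = -associator (star z) (star y) (star x) := by
  simp only [associator_apply, star_sub, star_mul, neg_sub]

theorem strTrip_star_one_one (x : A) : strTrip star x 1 1 = 2 • x - star x := by
  simp only [strTrip, star_one, mul_one, one_mul, two_nsmul]

theorem strTrip_star_one_left_right (x : A) : strTrip star 1 x 1 = 2 • star x - x := by
  simp only [strTrip, star_one, mul_one, one_mul, two_nsmul]

theorem strTrip_star_isSelfAdjoint_one (hh : IsSelfAdjoint h) (x : A) :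
    strTrip star h 1 x = h * x := by
  simp only [strTrip, star_one, hh.star_eq, mul_one, add_sub_cancel_right]

theorem strTrip_star_one_isSelfAdjoint (hh : IsSelfAdjoint h) (x : A) :
    strTrip star 1 h x = h * x := by
  simp only [strTrip, star_one, hh.star_eq, mul_one, one_mul, add_sub_cancel_right]

theorem strTrip_star_skew_one (hs : star s = -s) (x : A) :
    strTrip star s 1 x = s * x + 2 • (x * s) := by
  simp only [strTrip, star_one, hs, mul_one, mul_neg]
  abel

theorem strTrip_star_one_skew (hs : star s = -s) (x : A) :
    strTrip star 1 s x = -(s * x + 2 • (x * s)) := by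
  simp only [strTrip, star_one, hs, mul_one, one_mul, mul_neg, neg_mul]
  abel

theorem strTrip_star_skew_self (hs : star s = -s) (x : A) :
    strTrip star s s x = -(s * s * x) := by
  simp only [strTrip, hs, mul_neg, neg_mul]
  abel

namespace StructurableIdentity

theorem associator_relation_of_isSelfAdjoint_of_skew (hA : StructurableIdentity A)
    (hh : IsSelfAdjoint h) (hs : star s = -s) (x : A) :
    associator h s x - associator s h x + 2 • associator h x s + associator x s h
      + associator x h s = 0 := by
  have commutator := hA h 1 1 s x
  simp only [strTrip_star_isSelfAdjoint_one hh, strTrip_star_one_isSelfAdjoint hh,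
    strTrip_star_one_skew hs, mul_one] at commutator
  simp only [strTrip, star_mul, star_one, hh.star_eq, hs, mul_one, one_mul, mul_add, mul_neg,
    neg_mul, mul_smul_comm] at commutator
  simp only [associator_apply]
  linear_combination (norm := module) commutator

theorem associator_relation_of_skew_of_skew (hA : StructurableIdentity A)
    (hr : star r = -r) (hs : star s = -s) (x : A) :
    associator r s x - associator s r x + 2 • (associator r x s - associator s x r)
      + associator x r s - associator x s r = 0 := by
  have commutator := hA s 1 r 1 x
  simp only [strTrip_star_skew_one hr, strTrip_star_skew_one hs,
    strTrip_star_one_skew hs] at commutator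
  simp only [strTrip, star_mul, star_add, star_neg, star_nsmul, star_one, hr, hs, mul_one,
    one_mul, mul_add, add_mul, mul_neg, neg_mul, neg_neg, mul_smul_comm,
    smul_mul_assoc] at commutator
  simp only [associator_apply]
  linear_combination (norm := module) commutator

theorem associator_add_associator_add_two_nsmul_of_skew (hA : StructurableIdentity A)
    (hr : star r = -r) (hs : star s = -s) :
    associator r s s + associator s s r + 2 • associator s r s = 0 := by
  have commutator := hA r 1 s s 1
  simp only [strTrip_star_skew_self hs, strTrip_star_skew_one hr,
    strTrip_star_one_skew hr] at commutator
  simp only [strTrip, star_mul, star_add, star_neg, star_nsmul, hr, hs, mul_one,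
    one_mul, mul_add, add_mul, mul_neg, neg_mul, neg_neg, mul_smul_comm,
    smul_mul_assoc] at commutator
  simp only [associator_apply]
  linear_combination (norm := module) commutator

theorem associator_add_associator_eq_two_nsmul_of_skew (hA : StructurableIdentity A)
    (hr : star r = -r) (hs : star s = -s) :
    associator r s s + associator s s r = 2 • associator s r s := by
  have commutator := hA r s s 1 1
  simp only [strTrip_star_one_one, strTrip_star_skew_one hs] at commutator
  simp only [strTrip, star_mul, star_add, star_sub, star_neg, hr, hs,
    mul_one, one_mul, mul_add, add_mul, mul_sub, sub_mul, mul_neg, neg_mul, neg_neg,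
    mul_smul_comm, smul_mul_assoc] at commutator
  simp only [associator_apply]
  linear_combination (norm := module) -commutator

theorem associator_eq_zero_of_isSelfAdjoint_of_skew (hA : StructurableIdentity A)
    (h2 : IsSMulRegular A 2) (hh : IsSelfAdjoint h) (hs : star s = -s) :
    associator h s s = 0 := by
  have relation : 3 • associator h s s + associator s s h = 0 := by
    linear_combination (norm := module) hA.associator_relation_of_isSelfAdjoint_of_skew hh hs s
  have star_relation : 3 • associator s s h + associator h s s = 0 := by
    have star_eq := congrArg star relation
    simp only [star_add, star_nsmul, star_associator, hh.star_eq, hs, star_zero] at star_eq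
    simp only [associator_apply, mul_neg, neg_mul, neg_neg] at star_eq ⊢
    linear_combination (norm := module) -star_eq
  have eight : 2 ^ 3 • associator h s s = 0 := by
    linear_combination (norm := module) 3 • relation - star_relation
  exact (h2.pow 3).right_eq_zero_of_smul eight

theorem associator_eq_zero_of_skew_of_skew (hA : StructurableIdentity A)
    (h2 : IsSMulRegular A 2) (h3 : IsSMulRegular A 3)
    (hr : star r = -r) (hs : star s = -s) : associator r s s = 0 := by
  have symmetric : associator r s s - associator s s r = 0 := by
    refine h3.right_eq_zero_of_smul ?_
    linear_combination (norm := module) hA.associator_relation_of_skew_of_skew hr hs s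
  have antisymmetric : associator r s s + associator s s r = 0 := by
    refine h2.right_eq_zero_of_smul ?_
    linear_combination (norm := module) hA.associator_add_associator_add_two_nsmul_of_skew hr hs
      + hA.associator_add_associator_eq_two_nsmul_of_skew hr hs
  refine h2.right_eq_zero_of_smul ?_
  linear_combination (norm := module) symmetric + antisymmetric

theorem mul_mul_self_of_skew (hA : StructurableIdentity A)
    (h2 : IsSMulRegular A 2) (h3 : IsSMulRegular A 3) (hs : star s = -s) (x : A) :
    x * s * s = x * (s * s) := by
  have hermitian_part : associator (x + star x) s s = 0 :=
    hA.associator_eq_zero_of_isSelfAdjoint_of_skew h2 (.add_star_self x) hs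
  have skew_part : associator (x - star x) s s = 0 :=
    hA.associator_eq_zero_of_skew_of_skew h2 h3 (by rw [star_sub, star_star, neg_sub]) hs
  refine sub_eq_zero.mp (h2.right_eq_zero_of_smul ?_)
  simp only [associator_apply, add_mul, sub_mul] at hermitian_part skew_part
  linear_combination (norm := module) hermitian_part + skew_part

end StructurableIdentity

theorem eq_zero_of_strTrip_star_one_left_right_eq_zero (h3 : IsSMulRegular A 3)
    {x : A} (hx : strTrip star 1 x 1 = 0) : x = 0 := by
  rw [strTrip_star_one_left_right] at hx
  have star_hx : 2 • x - star x = 0 := by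
    simpa only [star_sub, star_nsmul, star_star, star_zero] using congrArg star hx
  refine h3.right_eq_zero_of_smul ?_
  linear_combination (norm := module) hx + 2 • star_hx

namespace IsConjInverse

theorem symm (huv : IsConjInverse u v) (hA : StructurableIdentity A) (h3 : IsSMulRegular A 3) :
    IsConjInverse v u := by
  intro x
  refine sub_eq_zero.mp (eq_zero_of_strTrip_star_one_left_right_eq_zero h3 ?_)
  -- `V_{u,v} = id` commutes with `V_{1,x}`, so `V_{1,x} = V_{1,V_{v,u}x}`.
  have commutator := hA u v 1 x 1
  simp only [huv _, strTrip_star_one_left_right, sub_self] at commutator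
  rw [strTrip_star_one_left_right, star_sub]
  linear_combination (norm := module) commutator

theorem eq_zero_of_mul_star_self_eq_zero (huv : IsConjInverse u v) (hvu : IsConjInverse v u)
    (h3 : IsSMulRegular A 3) (hu : u * star u = 0) (hvuu : v * star u * u = 0) : u = 0 := by
  have double : 2 • (u * star v * u) = u := by
    simpa only [strTrip, hu, zero_mul, sub_zero, two_nsmul] using huv u
  have neg : -(u * star v * u) = u := by
    simpa only [strTrip, hu, hvuu, zero_mul, zero_add, zero_sub] using hvu u
  refine h3.right_eq_zero_of_smul ?_
  linear_combination (norm := module) -double - 2 • neg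

end IsConjInverse

theorem one_add_skew_ne_zero [Nontrivial A] (h2 : IsSMulRegular A 2) (hs : star s = -s) :
    1 + s ≠ 0 := by
  intro hzero
  have hstar : 1 - s = 0 := by
    simpa only [star_add, star_one, hs, star_zero, ← sub_eq_add_neg] using congrArg star hzero
  refine one_ne_zero (h2.right_eq_zero_of_smul (?_ : 2 • (1 : A) = 0))
  linear_combination (norm := module) hzero + hstar

theorem not_isConjInverse_one_add_skew [Nontrivial A] (hA : StructurableIdentity A)
    (h2 : IsSMulRegular A 2) (h3 : IsSMulRegular A 3) (hs : star s = -s) (hss : s * s = 1) :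
    ¬ IsConjInverse (1 + s) v := by
  intro huv
  have hstar : star (1 + s) = 1 - s := by rw [star_add, star_one, hs, sub_eq_add_neg]
  have hu : (1 + s) * star (1 + s) = 0 := by
    rw [hstar, add_mul, mul_sub, mul_sub, hss, one_mul, one_mul, mul_one, sub_add_sub_cancel,
      sub_self]
  have hvuu : v * star (1 + s) * (1 + s) = 0 := by
    have hvss : v * s * s = v := by rw [hA.mul_mul_self_of_skew h2 h3 hs, hss, mul_one]
    rw [hstar, mul_sub, mul_one, mul_add, mul_one, sub_mul, hvss, sub_add_sub_cancel, sub_self]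
  exact one_add_skew_ne_zero h2 hs
    (huv.eq_zero_of_mul_star_self_eq_zero (huv.symm hA h3) h3 hu hvuu)

theorem stmt6_general [Nontrivial A] (h2 : IsSMulRegular A 2) (h3 : IsSMulRegular A 3)
    (hA : StructurableIdentity A) (hdiv : IsConjDivision (star : A → A)) :
    ¬ ∃ s : A, star s = -s ∧ s * s = 1 := by
  rintro ⟨s, hs, hss⟩
  obtain ⟨v, hv⟩ := hdiv (1 + s) (one_add_skew_ne_zero h2 hs)
  exact not_isConjInverse_one_add_skew hA h2 h3 hs hss hv

end StarRing

/-- Let `A` be a structurable division algebra over a field `k` with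
`char k ≠ 2, 3`.  Then there is no skew element `s` (i.e. `s̄ = -s`) with `s·s = 1`. -/
theorem stmt6 {k : Type*} [Field k] {A : Type*} [NonAssocRing A] [Module k A]
    [SMulCommClass k A A] [IsScalarTower k A A] [FiniteDimensional k A] [Nontrivial A]
    (h2 : (2 : k) ≠ 0) (h3 : (3 : k) ≠ 0)
    (bar : A → A) (hstr : IsStructurable k A bar) (hdiv : IsConjDivision bar) :
    ¬ ∃ s : A, bar s = -s ∧ s * s = 1 := by
  let : StarRing A := hstr.starRing
  exact stmt6_general (isSMulRegular_of_natCast_ne_zero k (n := 2) h2)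
    (isSMulRegular_of_natCast_ne_zero k (n := 3) h3) hstr.2.2.2.2 hdiv
end

section
/- Let A be a structurable division algebra over a field k with char(k) ≠ 2 and char(k) ≠ 3. Let 0 ≠ x ∈ A with conjugate inverse x̂, and let 0 ≠ s ∈ S with conjugate inverse ŝ ∈ S. Then s + q_x(ŝ) ≠ 0 and x − s·(q_{x̂}(s)·x) ≠ 0. Moreover, if t ∈ S is the conjugate inverse of s + q_x(ŝ) and u ∈ A is the conjugate inverse of x − s·(q_{x̂}(s)·x), then the pair (u,t) satisfies the one-invertibility system: {x,u,z} = z + s·(t·z) for all z ∈ A (i.e. V_{x,u} = id + L_s L_t), s·u = −(1/3)·U_x(t·x), and ψ(x, s·(t·x)) = 0. -/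
/-!
Everything takes place in the Kantor triple system of `A`. For a conjugate inverse `y` of `x` one
has `V_{x,σx} = -V_{q_x(σ)y,y}` and `q_y ∘ q_x = id`, and evaluating the identities of the triple
system at `x` and `y` gives, for all skew `σ` and `τ` and with `α = ψ(σ(τx), x)`,

* `q_x(τ)(q_y(σ)x) = σ(τx) - αy`,
* `V_{x, τ(σy) + q_y(σ)(q_x(τ)y)} = L_σ L_τ + L_{q_x(τ)} L_{q_y(σ)}`.

If `r` is the inverse of `s`, these force `q_x(s)` and `q_y(r)` to be inverse to each other.
An exchange argument in the associative ring of operators, as for Hua's identity, then shows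
`L_s L_t = L_{q_x(t)} L_{q_y(s)}` for the inverse `t` of `s + q_x(r)`, and the one-invertibility
system is obtained by specialising the two identities to `(σ, τ) = (s, t)`. That `s + q_x(r)` does
not vanish follows from `V_{z,rz} = -V_{(s + q_x(r))y,y}` for `z = x + sy`: if `z` is conjugate
invertible, then `V_{z,rz} = 0` only when `rz = 0`, that is, when `z = 0`.
-/

theorem mul_eq_mul_of_mul_eq_neg_one {R : Type*} [Ring R] {s r p q t w : R}
    (hrs : r * s = -1) (hpq : p * q = -1) (ht : (s + q) * t = -1) (hw : w * (p + r) = -1) :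
    s * t = w * p := by
  have exchange : (p + r) * s = p * (s + q) := by rw [add_mul, mul_add, hrs, hpq]
  calc s * t = -(w * ((p + r) * s) * t) := by rw [← mul_assoc, hw, neg_one_mul, neg_mul, neg_neg]
    _ = -(w * p * ((s + q) * t)) := by rw [exchange]; simp only [mul_assoc]
    _ = w * p := by rw [ht, mul_neg_one, neg_neg]

/-- A Kantor triple system `{a, b, c} = V a b c`, presented together with the space `S` that
parametrises the operators `z ↦ {a, z, c} - {c, z, a}`. For a structurable algebra `S` is the space
of skew elements, `L` is left multiplication and `ψ (a, c) = a c̄ - c ā`; keeping `S` apart from `A`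
lets the argument run on operator identities alone. -/
structure KantorTripleSystem (k A S : Type*) [Field k] [AddCommGroup A] [Module k A]
    [AddCommGroup S] [Module k S] where
  V : A →ₗ[k] A →ₗ[k] Module.End k A
  L : S →ₗ[k] Module.End k A
  ψ : A →ₗ[k] A →ₗ[k] S
  V_mul_V_sub (x y z w : A) : V x y * V z w - V z w * V x y = V (V x y z) w - V z (V y x w)
  V_sub_V_swap (a b c : A) : V a b c - V c b a = L (ψ a c) b
  V_mul_L_add_L_mul_V (σ : S) (a b : A) : V b a * L σ + L σ * V a b = L (ψ (L σ a) b)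
  exists_ψ_eq (σ : S) : ∃ c d, ψ c d = σ
  L_injective : Function.Injective L
  eq_zero_of_V_right (b : A) : (∀ z, V z b = 0) → b = 0

namespace KantorTripleSystem

variable {k A S : Type*} [Field k] [AddCommGroup A] [Module k A] [AddCommGroup S] [Module k S]
  (D : KantorTripleSystem k A S)

theorem isAlt_ψ : D.ψ.IsAlt := fun a => by
  apply D.L_injective
  ext b
  rw [← D.V_sub_V_swap, sub_self, map_zero, LinearMap.zero_apply]

theorem V_mul_L_apply (σ : S) (a b z : A) :
    D.V b a (D.L σ z) + D.L σ (D.V a b z) = D.L (D.ψ (D.L σ a) b) z :=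
  LinearMap.congr_fun (D.V_mul_L_add_L_mul_V σ a b) z

theorem V_L_left_sub (σ : S) (a b : A) :
    D.V (D.L σ a) b - D.V (D.L σ b) a = D.L σ * D.L (D.ψ a b) := by
  ext z
  have outer_a := D.V_sub_V_swap (D.L σ a) b z
  have outer_b := D.V_sub_V_swap (D.L σ b) a z
  have inner := congrArg (D.L σ) (D.V_sub_V_swap a z b)
  rw [← D.V_mul_L_apply] at outer_a outer_b
  rw [map_sub] at inner
  simp only [LinearMap.sub_apply, Module.End.mul_apply]
  linear_combination (norm := module) outer_a - outer_b + inner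

theorem V_L_right_sub (τ : S) (a b : A) :
    D.V a (D.L τ b) - D.V b (D.L τ a) = -(D.L (D.ψ a b) * D.L τ) := by
  -- Once `τ = ψ(c, d)`, every term is a value of `V`, and four commutators of `V` give the claim.
  obtain ⟨c, d, rfl⟩ := D.exists_ψ_eq τ
  have left := D.V_L_left_sub (D.ψ a b) c d
  rw [← D.V_sub_V_swap a c b, ← D.V_sub_V_swap a d b] at left
  rw [← left, ← D.V_sub_V_swap c b d, ← D.V_sub_V_swap c a d]
  simp only [map_sub, LinearMap.sub_apply]
  linear_combination (norm := module) D.V_mul_V_sub b c a d - D.V_mul_V_sub b d a c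
    - D.V_mul_V_sub a c b d + D.V_mul_V_sub a d b c

theorem V_swap_congr {a b c d : A} (h : D.V a b = D.V c d) : D.V b a = D.V d c := by
  ext w
  refine sub_eq_zero.mp (D.eq_zero_of_V_right _ fun z => ?_)
  have hab := D.V_mul_V_sub a b z w
  have hcd := D.V_mul_V_sub c d z w
  rw [h] at hab
  rw [map_sub]
  linear_combination (norm := module) hab - hcd

/-- Conjugate invertibility: `y` is a conjugate inverse of `x` if `V x y` is the identity. -/
def IsConjInverse (x y : A) : Prop := D.V x y = 1

/-- `L r` is a two-sided inverse of `L s` up to sign; for skew elements of a structurable algebra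
this is conjugate invertibility. -/
def IsSkewInverse (s r : S) : Prop := D.L s * D.L r = -1 ∧ D.L r * D.L s = -1

/-- The map `q_x(σ) = (1/6) ψ(x, {x, σ x, x})`. -/
noncomputable def q (x : A) : S →ₗ[k] S :=
  (6 : k)⁻¹ • D.ψ x ∘ₗ (D.V x).flip x ∘ₗ D.L.flip x

theorem six_smul_q [NeZero (2 : k)] [NeZero (3 : k)] (x : A) (σ : S) :
    (6 : k) • D.q x σ = D.ψ x (D.V x (D.L σ x) x) := by
  have six_ne_zero : (6 : k) ≠ 0 := by
    rw [show (6 : k) = 2 * 3 by norm_num]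
    exact mul_ne_zero two_ne_zero three_ne_zero
  exact smul_inv_smul₀ six_ne_zero _

namespace IsSkewInverse

variable {D} {s r : S} (h : D.IsSkewInverse s r)
include h

theorem symm : D.IsSkewInverse r s := And.symm h

theorem L_L (a : A) : D.L s (D.L r a) = -a := LinearMap.congr_fun h.1 a

theorem eq_zero_of_L_apply {a : A} (ha : D.L r a = 0) : a = 0 := by
  rw [← neg_eq_zero, ← h.L_L, ha, map_zero]

theorem sub_L_L (p : S) (a : A) : a - D.L s (D.L p a) = -D.L s (D.L (p + r) a) := by
  rw [map_add, LinearMap.add_apply, map_add, h.L_L]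
  abel

theorem V_L_L (a b : A) : D.V (D.L s a) (D.L r b) = -(D.L s * D.V a b * D.L r) := by
  have swap := D.V_L_right_sub r (D.L s a) b
  rw [h.symm.L_L, ← D.V_mul_L_add_L_mul_V, add_mul, mul_assoc, h.1, mul_neg, mul_one,
    map_neg] at swap
  linear_combination (norm := module) swap

end IsSkewInverse

namespace IsConjInverse

variable {D} {x y : A} (h : D.IsConjInverse x y)
include h

theorem V_eq_one : D.V x y = 1 := h

theorem V_apply (z : A) : D.V x y z = z := LinearMap.congr_fun h z

theorem symm : D.IsConjInverse y x := by
  ext w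
  refine sub_eq_zero.mp (D.eq_zero_of_V_right _ fun z => ?_)
  have commutator := D.V_mul_V_sub x y z w
  rw [h.V_eq_one, one_mul, mul_one, sub_self, Module.End.one_apply] at commutator
  rw [map_sub, Module.End.one_apply, ← neg_sub, ← commutator, neg_zero]

theorem ψ_L_left (σ : S) : D.ψ (D.L σ y) x = (2 : k) • σ := by
  apply D.L_injective
  rw [← D.V_mul_L_add_L_mul_V, h.V_eq_one, h.symm.V_eq_one, map_smul, one_mul, mul_one, two_smul]

theorem ψ_L_right (σ : S) : D.ψ x (D.L σ y) = -((2 : k) • σ) := by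
  rw [← D.isAlt_ψ.neg, h.ψ_L_left]

theorem V_L_apply_right (σ : S) : D.V (D.L σ x) x y = (3 : k) • D.L σ x := by
  have swap := D.V_sub_V_swap (D.L σ x) x y
  rw [h.symm.ψ_L_left, h.symm.V_apply, map_smul, LinearMap.smul_apply] at swap
  linear_combination (norm := module) swap

theorem V_L_apply_L (σ τ : S) :
    D.V x (D.L τ x) (D.L σ y) =
      D.L (D.ψ (D.L σ (D.L τ x)) x) y - (3 : k) • D.L σ (D.L τ x) := by
  rw [← D.V_mul_L_apply, h.V_L_apply_right, map_smul, add_sub_cancel_right]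

theorem V_V_left (a : A) : D.V (D.V x a x) y = D.V x (D.V a x y) := by
  have commutator := D.V_mul_V_sub x a x y
  rw [h.V_eq_one, one_mul, mul_one, sub_self] at commutator
  exact sub_eq_zero.mp commutator.symm

theorem V_L_right_comm (σ τ : S) :
    D.V x (D.L τ (D.L σ y)) = D.V (D.L σ (D.L τ x)) y := by
  have left := D.V_L_left_sub σ y (D.L τ x)
  have right := D.V_L_right_sub τ x (D.L σ y)
  rw [h.symm.ψ_L_right, map_neg, map_smul, mul_neg, mul_smul_comm] at left
  rw [h.ψ_L_right, map_neg, map_smul, neg_mul, neg_neg, smul_mul_assoc] at right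
  linear_combination (norm := module) left + right

theorem eq_zero_of_L_apply [NeZero (2 : k)] {σ : S} (hσ : D.L σ x = 0) : σ = 0 := by
  have double := h.symm.ψ_L_left σ
  rw [hσ, map_zero, LinearMap.zero_apply] at double
  exact (smul_eq_zero_iff_right two_ne_zero).mp double.symm

theorem eq_zero_of_V_right [NeZero (3 : k)] {b : A} (hb : D.V x b = 0) : b = 0 := by
  have hb' : D.V b x = 0 := by
    rw [D.V_swap_congr (hb.trans (map_zero (D.V 0)).symm), map_zero]
  have b_eq : b = D.L (D.ψ y b) x := by
    simpa [hb', h.symm.V_apply] using D.V_sub_V_swap y x b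
  have triple : (3 : k) • D.ψ y b = 0 := by
    have double := h.symm.ψ_L_right (D.ψ y b)
    rw [← b_eq] at double
    linear_combination (norm := module) double
  rw [b_eq, (smul_eq_zero_iff_right three_ne_zero).mp triple, map_zero, LinearMap.zero_apply]

theorem right_unique [NeZero (3 : k)] {y' : A} (h' : D.IsConjInverse x y') : y' = y :=
  sub_eq_zero.mp <| h.eq_zero_of_V_right <| by rw [map_sub, h'.V_eq_one, h.V_eq_one, sub_self]

section Q

variable [NeZero (2 : k)] [NeZero (3 : k)]

theorem V_L_self (σ : S) : D.V x (D.L σ x) x = -((3 : k) • D.L (D.q x σ) y) := by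
  have swap := D.V_sub_V_swap x y (D.V x (D.L σ x) x)
  rw [h.V_apply, h.V_V_left, h.V_L_apply_right, map_smul, LinearMap.smul_apply,
    ← D.six_smul_q, map_smul, LinearMap.smul_apply] at swap
  refine (smul_right_inj (two_ne_zero (α := k))).mp ?_
  linear_combination (norm := module) -swap

theorem V_L_eq (σ : S) : D.V x (D.L σ x) = -D.V (D.L (D.q x σ) y) y := by
  have triple := h.V_V_left (D.L σ x)
  rw [h.V_L_self, h.V_L_apply_right, map_neg, map_smul, map_smul] at triple
  refine (smul_right_inj (three_ne_zero (α := k))).mp ?_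
  rw [← triple]
  simp

theorem V_L_swap_eq (σ : S) : D.V (D.L σ x) x = -D.V y (D.L (D.q x σ) y) := by
  have V_eq : D.V x (D.L σ x) = D.V (-D.L (D.q x σ) y) y := by
    rw [h.V_L_eq, map_neg, LinearMap.neg_apply]
  rw [D.V_swap_congr V_eq, map_neg]

theorem eq_zero_of_V_L {σ : S} (hσ : D.V (D.L σ x) x = 0) : σ = 0 := by
  have triple := h.V_L_apply_right σ
  rw [hσ, LinearMap.zero_apply] at triple
  exact h.eq_zero_of_L_apply ((smul_eq_zero_iff_right three_ne_zero).mp triple.symm)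

theorem q_q (σ : S) : D.q y (D.q x σ) = σ := by
  have V_eq : D.V (D.L σ x) x = D.V (D.L (D.q y (D.q x σ)) x) x := by
    rw [h.V_L_swap_eq, h.symm.V_L_eq, neg_neg]
  refine (sub_eq_zero.mp (h.eq_zero_of_V_L ?_)).symm
  rw [map_sub, LinearMap.sub_apply, map_sub, LinearMap.sub_apply, V_eq, sub_self]

theorem V_L_left_apply_L (σ τ : S) :
    D.V (D.L τ x) x (D.L σ x) =
      D.L (D.ψ (D.L σ x) (D.L τ x)) x + (3 : k) • D.L σ (D.L (D.q x τ) y) := by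
  rw [← D.V_mul_L_apply, h.V_L_self, map_neg, map_smul, neg_add_cancel_right]

theorem V_L_q (σ : S) : D.V x (D.L (D.q y σ) x) = -D.V (D.L σ y) y := by
  rw [h.V_L_eq, h.symm.q_q]

theorem ψ_L_L (σ τ : S) :
    D.ψ (D.L σ (D.L τ x)) x = -D.ψ (D.L σ y) (D.L (D.q x τ) y) := by
  apply D.L_injective
  rw [map_neg, ← D.V_mul_L_add_L_mul_V, ← D.V_mul_L_add_L_mul_V, h.V_L_eq, h.V_L_swap_eq]
  simp only [neg_mul, mul_neg, neg_add]

theorem L_q_L_q (σ τ : S) :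
    D.L (D.q x τ) (D.L (D.q y σ) x) =
      D.L σ (D.L τ x) - D.L (D.ψ (D.L σ (D.L τ x)) x) y := by
  have swap := D.V_sub_V_swap (D.L σ y) y (D.L (D.q x τ) y)
  have V_σ : D.V (D.L σ y) y = -D.V x (D.L (D.q y σ) x) := by rw [h.V_L_q, neg_neg]
  have V_q : D.V (D.L (D.q x τ) y) y = -D.V x (D.L τ x) := by rw [h.V_L_eq, neg_neg]
  have ψ_q : D.ψ (D.L (D.q x τ) (D.L (D.q y σ) x)) x = D.ψ (D.L σ y) (D.L (D.q x τ) y) := by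
    rw [h.ψ_L_L, h.symm.q_q, D.isAlt_ψ.neg]
  rw [V_σ, V_q, LinearMap.neg_apply, LinearMap.neg_apply, h.V_L_apply_L, h.V_L_apply_L, ψ_q]
    at swap
  rw [h.ψ_L_L] at swap ⊢
  rw [map_neg, LinearMap.neg_apply] at swap ⊢
  refine (smul_right_inj (three_ne_zero (α := k))).mp ?_
  linear_combination (norm := module) swap

theorem V_L_ψ_L_L (σ τ : S) :
    D.V (D.L (D.ψ (D.L σ (D.L τ x)) x) y) y = D.V x (D.L (D.ψ (D.L τ (D.L σ y)) y) x) := by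
  have left := congrArg (fun a => D.V a y) (h.L_q_L_q σ τ)
  have right := congrArg (D.V x) (h.symm.L_q_L_q τ σ)
  simp only [map_sub, LinearMap.sub_apply, ← h.V_L_right_comm] at left right
  linear_combination (norm := module) left - right

theorem V_L_L_add (σ τ : S) :
    D.V x (D.L τ (D.L σ y) + D.L (D.q y σ) (D.L (D.q x τ) y)) =
      D.L σ * D.L τ + D.L (D.q x τ) * D.L (D.q y σ) := by
  -- As `V x (q_y(σ) x) = -V (σ y) y`, the next two commutators are opposite.
  have commutator := D.V_mul_V_sub x (D.L τ x) (D.L σ y) y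
  have commutator_swap := D.V_mul_V_sub x (D.L τ x) x (D.L (D.q y σ) x)
  have ψ_q : D.ψ (D.L (D.q y σ) x) (D.L τ x) = D.ψ (D.L τ (D.L σ y)) y := by
    rw [h.symm.ψ_L_L, D.isAlt_ψ.neg]
  rw [h.V_L_apply_L, h.V_L_apply_right] at commutator
  rw [h.V_L_q, h.V_L_self, h.V_L_left_apply_L, ψ_q] at commutator_swap
  have left := D.V_L_left_sub σ y (D.L τ x)
  have right := D.V_L_right_sub (D.q y σ) x (D.L (D.q x τ) y)
  rw [h.symm.ψ_L_right, map_neg, map_smul, mul_neg, mul_smul_comm] at left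
  rw [h.ψ_L_right, map_neg, map_smul, neg_mul, neg_neg, smul_mul_assoc] at right
  have cancel := h.V_L_ψ_L_L σ τ
  have comm := h.V_L_right_comm σ τ
  simp only [map_add, map_sub, map_neg, map_smul, LinearMap.sub_apply, LinearMap.neg_apply,
    LinearMap.smul_apply, mul_neg, neg_mul] at commutator commutator_swap ⊢
  refine (smul_right_inj (mul_ne_zero (two_ne_zero (α := k)) (three_ne_zero (α := k)))).mp ?_
  linear_combination (norm := module) commutator + commutator_swap + cancel
    - (3 : k) • left + (3 : k) • right + (6 : k) • comm

theorem L_q_mul_L_q {s r : S} (hs : D.IsSkewInverse s r) :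
    D.L (D.q x s) * D.L (D.q y r) = -1 := by
  have apply_y := h.symm.L_q_L_q s r
  rw [hs.L_L, map_neg, LinearMap.neg_apply, D.isAlt_ψ.self_eq_zero, neg_zero, map_zero,
    LinearMap.zero_apply, sub_zero] at apply_y
  have V_eq := h.V_L_L_add r s
  rw [hs.L_L, apply_y, map_add, map_neg, h.V_eq_one, hs.2] at V_eq
  exact (add_left_cancel V_eq).symm

theorem isSkewInverse_q {s r : S} (hs : D.IsSkewInverse s r) :
    D.IsSkewInverse (D.q x s) (D.q y r) :=
  ⟨h.L_q_mul_L_q hs, h.symm.L_q_mul_L_q hs.symm⟩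

end Q

section OneInvertibility

variable [NeZero (2 : k)]

theorem add_L_ne_zero {s : S} (hs : s ≠ 0) : x + D.L s y ≠ 0 := by
  intro hz
  have double := h.ψ_L_left s
  rw [eq_neg_of_add_eq_zero_right hz, map_neg, LinearMap.neg_apply, D.isAlt_ψ.self_eq_zero,
    neg_zero] at double
  exact hs ((smul_eq_zero_iff_right two_ne_zero).mp double.symm)

variable [NeZero (3 : k)] {s r t : S}

theorem isSkewInverse_q_add (ht : D.IsSkewInverse (s + D.q x r) t) :
    D.IsSkewInverse (D.q y s + r) (D.q x t) := by
  simpa only [map_add, h.q_q] using h.symm.isSkewInverse_q ht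

variable (hs : D.IsSkewInverse s r)
include hs

theorem V_add_L_self : D.V (x + D.L s y) (D.L r (x + D.L s y)) =
    -D.V (D.L (s + D.q x r) y) y := by
  have mixed : D.V (D.L s y) (D.L r x) = 1 := by
    rw [hs.V_L_L, h.symm.V_eq_one, mul_one, hs.1, neg_neg]
  simp only [map_add, LinearMap.add_apply, hs.symm.L_L, map_neg, mixed, h.V_eq_one, h.V_L_eq]
  abel

theorem add_q_ne_zero (hs₀ : s ≠ 0) {w : A} (hw : D.IsConjInverse (x + D.L s y) w) :
    s + D.q x r ≠ 0 := by
  intro hsum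
  have V_eq_zero : D.V (x + D.L s y) (D.L r (x + D.L s y)) = 0 := by
    rw [h.V_add_L_self hs, hsum, map_zero, LinearMap.zero_apply, map_zero, LinearMap.zero_apply,
      neg_zero]
  exact h.add_L_ne_zero hs₀ (hs.eq_zero_of_L_apply (hw.eq_zero_of_V_right V_eq_zero))

theorem sub_L_L_q_ne_zero (hsum : s + D.q x r ≠ 0) : x - D.L s (D.L (D.q y s) x) ≠ 0 := by
  rw [hs.sub_L_L, neg_ne_zero]
  intro hzero
  have coefficient := h.eq_zero_of_L_apply (hs.symm.eq_zero_of_L_apply hzero)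
  rw [← h.symm.q_q s, ← map_add, coefficient, map_zero] at hsum
  exact hsum rfl

variable (ht : D.IsSkewInverse (s + D.q x r) t)
include ht

theorem L_mul_L_eq : D.L s * D.L t = D.L (D.q x t) * D.L (D.q y s) := by
  have hq := h.symm.isSkewInverse_q hs
  have hadd := h.isSkewInverse_q_add ht
  refine mul_eq_mul_of_mul_eq_neg_one hs.2 hq.1 ?_ ?_
  · rw [← map_add, ht.1]
  · rw [← map_add, hadd.2]

theorem L_mul_L_swap_eq : D.L t * D.L s = D.L (D.q y s) * D.L (D.q x t) := by
  have hq := h.symm.isSkewInverse_q hs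
  have hadd := h.isSkewInverse_q_add ht
  refine (mul_eq_mul_of_mul_eq_neg_one hq.2 hs.1 ?_ ?_).symm
  · rw [← map_add, hadd.1]
  · rw [← map_add, ht.2]

theorem isConjInverse_sub_L_L_q :
    D.IsConjInverse (x - D.L s (D.L (D.q y s) x)) (-D.L r (D.L (D.q x t) y)) := by
  have hadd := h.isSkewInverse_q_add ht
  rw [hs.sub_L_L, IsConjInverse, map_neg, map_neg, LinearMap.neg_apply, neg_neg, hs.V_L_L,
    hadd.V_L_L, h.V_eq_one, mul_one, hadd.1, neg_neg, mul_one, hs.1, neg_neg]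

theorem V_neg_L_L_q : D.V x (-D.L r (D.L (D.q x t) y)) = 1 + D.L s * D.L t := by
  have hadd := h.isSkewInverse_q_add ht
  have split : -D.L r (D.L (D.q x t) y) = y + D.L (D.q y s) (D.L (D.q x t) y) := by
    have apply_y := hadd.L_L y
    rw [map_add, LinearMap.add_apply] at apply_y
    linear_combination (norm := module) -apply_y
  have double := h.V_L_L_add s t
  rw [← Module.End.mul_apply (D.L t), h.L_mul_L_swap_eq hs ht, Module.End.mul_apply,
    ← h.L_mul_L_eq hs ht, map_add] at double
  rw [split, map_add, h.V_eq_one]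
  refine (smul_right_inj (two_ne_zero (α := k))).mp ?_
  linear_combination (norm := module) double

theorem ψ_L_L_eq_zero : D.ψ x (D.L s (D.L t x)) = 0 := by
  have key := h.L_q_L_q s t
  have comm := LinearMap.congr_fun (h.L_mul_L_eq hs ht) x
  rw [Module.End.mul_apply, Module.End.mul_apply] at comm
  rw [← comm, eq_comm, sub_eq_self] at key
  rw [← D.isAlt_ψ.neg, h.symm.eq_zero_of_L_apply key, neg_zero]

theorem one_invertibility {u : A} (hu : D.IsConjInverse (x - D.L s (D.L (D.q y s) x)) u) :
    D.V x u = 1 + D.L s * D.L t ∧ D.L s u = -((3 : k)⁻¹ • D.V x (D.L t x) x) ∧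
      D.ψ x (D.L s (D.L t x)) = 0 := by
  rw [(h.isConjInverse_sub_L_L_q hs ht).right_unique hu]
  refine ⟨h.V_neg_L_L_q hs ht, ?_, h.ψ_L_L_eq_zero hs ht⟩
  rw [map_neg, hs.L_L, neg_neg, h.V_L_self, smul_neg, neg_neg, inv_smul_smul₀ three_ne_zero]

end OneInvertibility

end IsConjInverse
end KantorTripleSystem

theorem strTrip_add_right {A : Type*} [NonAssocRing A] (bar : A → A) (x y a b : A) :
    strTrip bar x y (a + b) = strTrip bar x y a + strTrip bar x y b := by
  simp only [strTrip, mul_add, add_mul]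
  abel

theorem strTrip_sub_strTrip_swap {A : Type*} [NonAssocRing A] (bar : A → A) (a b c : A) :
    strTrip bar a b c - strTrip bar c b a = strPsi bar a c * b := by
  simp only [strTrip, strPsi, sub_mul]
  abel

namespace IsStructurable

variable {k A : Type*} [Field k] [NonAssocRing A] [Module k A] {bar : A → A}

section Involution

variable (h : IsStructurable k A bar)
include h

theorem bar_add (a b : A) : bar (a + b) = bar a + bar b := h.1 a b

theorem bar_smul (c : k) (a : A) : bar (c • a) = c • bar a := h.2.1 c a

theorem bar_mul (a b : A) : bar (a * b) = bar b * bar a := h.2.2.1 a b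

theorem bar_bar (a : A) : bar (bar a) = a := h.2.2.2.1 a

theorem strTrip_strTrip_sub (x y z w a : A) :
    strTrip bar x y (strTrip bar z w a) - strTrip bar z w (strTrip bar x y a) =
      strTrip bar (strTrip bar x y z) w a - strTrip bar z (strTrip bar y x w) a :=
  h.2.2.2.2 x y z w a

theorem bar_zero : bar 0 = 0 := by simpa using h.bar_add 0 0

theorem bar_neg (a : A) : bar (-a) = -bar a := by
  rw [eq_neg_iff_add_eq_zero, ← h.bar_add, neg_add_cancel, h.bar_zero]

theorem bar_sub (a b : A) : bar (a - b) = bar a - bar b := by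
  rw [sub_eq_add_neg, h.bar_add, h.bar_neg, ← sub_eq_add_neg]

theorem bar_one : bar 1 = 1 := by simpa [h.bar_bar] using (h.bar_mul 1 (bar 1)).symm

theorem bar_associator (a b c : A) :
    bar (associator a b c) = -associator (bar c) (bar b) (bar a) := by
  simp only [associator_apply, h.bar_sub, h.bar_mul, neg_sub]

theorem strTrip_one_right_one (y : A) : strTrip bar 1 y 1 = bar y + bar y - y := by
  simp only [strTrip, h.bar_one, one_mul, mul_one]

theorem strPsi_skew_one {s : A} (hs : bar s = -s) : strPsi bar s 1 = s + s := by
  simp only [strPsi, h.bar_one, hs, one_mul, mul_one, sub_neg_eq_add]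

theorem eq_zero_of_hermitian_of_skew [NeZero (2 : k)] {f : A →+ A}
    (hermitian : ∀ a, bar a = a → f a = 0) (skew : ∀ a, bar a = -a → f a = 0) (a : A) :
    f a = 0 := by
  have f_add := hermitian (a + bar a) (by rw [h.bar_add, h.bar_bar, add_comm])
  have f_sub := skew (a - bar a) (by rw [h.bar_sub, h.bar_bar, neg_sub])
  rw [map_add] at f_add
  rw [map_sub] at f_sub
  refine (smul_eq_zero_iff_right (two_ne_zero (α := k))).mp ?_
  linear_combination (norm := module) f_add + f_sub

end Involution

section SkewAlternative

variable [NeZero (2 : k)] (h : IsStructurable k A bar) {s : A} (hs : bar s = -s)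
include h hs

theorem strTrip_skew_mul_add (a b z : A) :
    strTrip bar b a (s * z) + s * strTrip bar a b z =
      (strTrip bar b a s + s * strTrip bar a b 1) * z := by
  have double (z : A) : (2 : k) • (strTrip bar b a (s * z) + s * strTrip bar a b z) =
      (strPsi bar s (strTrip bar b a 1) + strPsi bar (strTrip bar b a s) 1) * z := by
    have swap_z : strTrip bar s z 1 = strTrip bar 1 z s + (s * z + s * z) := by
      rw [← sub_eq_iff_eq_add', strTrip_sub_strTrip_swap, h.strPsi_skew_one hs, add_mul]
    have commutator_s := h.strTrip_strTrip_sub b a s z 1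
    have commutator_one := h.strTrip_strTrip_sub b a 1 z s
    rw [swap_z, strTrip_add_right, strTrip_add_right] at commutator_s
    have swap_trip := strTrip_sub_strTrip_swap bar s (strTrip bar a b z) 1
    rw [h.strPsi_skew_one hs, add_mul] at swap_trip
    rw [add_mul, ← strTrip_sub_strTrip_swap, ← strTrip_sub_strTrip_swap]
    linear_combination (norm := module) commutator_s - commutator_one - swap_trip
  have at_one := double 1
  rw [mul_one, mul_one] at at_one
  refine (smul_right_inj (two_ne_zero (α := k))).mp ?_
  rw [double z, ← at_one, two_smul, two_smul, add_mul]

theorem associator_hermitian_skew {a : A} (ha : bar a = a) (z : A) :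
    associator a s z = -associator s a z := by
  have key := h.strTrip_skew_mul_add hs 1 a z
  simp only [strTrip, h.bar_one, ha, one_mul, mul_one, add_mul, mul_add, mul_sub, sub_mul]
    at key
  simp only [associator_apply]
  linear_combination (norm := module) -key

theorem associator_skew_skew {t : A} (ht : bar t = -t) (z : A) :
    associator s t z - associator t s z + (2 : k) • associator s z t = 0 := by
  have key := h.strTrip_skew_mul_add hs 1 t z
  simp only [strTrip, h.bar_one, ht, one_mul, mul_one, mul_neg, neg_mul, add_mul, mul_add,
    mul_sub, sub_mul] at key
  simp only [associator_apply]
  linear_combination (norm := module) key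

theorem associator_skew_flexible (z : A) : associator s z s = 0 := by
  have key := h.associator_skew_skew hs hs z
  rwa [sub_self, zero_add, smul_eq_zero_iff_right (two_ne_zero (α := k))] at key

variable [NeZero (3 : k)]

theorem associator_skew_self (z : A) : associator s s z = 0 := by
  refine h.eq_zero_of_hermitian_of_skew (f := AddMonoidHom.associator s s) ?_ ?_ z
  · intro a ha
    have right_zero : associator a s s = 0 := by
      rw [h.associator_hermitian_skew hs ha, h.associator_skew_flexible hs, neg_zero]
    have bar_right := h.bar_associator a s s
    rw [right_zero, h.bar_zero, hs, ha] at bar_right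
    simpa [associator_apply, sub_eq_zero, eq_comm] using bar_right
  · intro t ht
    have right_eq := h.associator_skew_skew hs ht s
    rw [h.associator_skew_flexible hs, zero_sub, neg_add_eq_zero] at right_eq
    have left_eq := congrArg bar right_eq
    rw [h.bar_smul, h.bar_associator, h.bar_associator, hs, ht] at left_eq
    simp only [associator_apply, neg_mul, mul_neg, neg_neg, AddMonoidHom.associator_apply]
      at right_eq left_eq ⊢
    refine (smul_eq_zero_iff_right (three_ne_zero (α := k))).mp ?_
    linear_combination (norm := module) -left_eq - (2 : k) • right_eq

theorem associator_skew_left (a b : A) : associator s a b = -associator a s b := by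
  rw [eq_neg_iff_add_eq_zero]
  refine h.eq_zero_of_hermitian_of_skew
    (f := (AddMonoidHom.associator s).flip b + (AddMonoidHom.associator.flip s).flip b) ?_ ?_ a
  · intro a ha
    simp [h.associator_hermitian_skew hs ha]
  · intro t ht
    have hst : bar (s + t) = -(s + t) := by rw [h.bar_add, hs, ht, neg_add]
    have polarized := h.associator_skew_self hst b
    have at_s := h.associator_skew_self hs b
    have at_t := h.associator_skew_self ht b
    simp only [associator_apply, add_mul, mul_add] at polarized at_s at_t
    change associator s t b + associator t s b = 0
    simp only [associator_apply]
    linear_combination (norm := module) polarized - at_s - at_t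

theorem associator_skew_right (a b : A) : associator a b s = -associator a s b := by
  have bar_left := congrArg bar (h.associator_skew_left hs (bar b) (bar a))
  rw [h.bar_neg, h.bar_associator, h.bar_associator, h.bar_bar, h.bar_bar, hs] at bar_left
  simp only [associator_apply, neg_mul, mul_neg] at bar_left ⊢
  linear_combination (norm := module) bar_left

end SkewAlternative

section

variable [NeZero (2 : k)] [NeZero (3 : k)] (h : IsStructurable k A bar)
include h

theorem associator_add_swap_bar (a b c : A) :
    associator c b (bar a) + associator c (bar a) b =
      associator c a (bar b) + associator c (bar b) a := by
  have swap_skew {t : A} (ht : bar t = -t) (d : A) :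
      associator c d t + associator c t d = 0 := by
    rw [h.associator_skew_right ht, neg_add_cancel]
  have left := swap_skew (t := a - bar a) (by rw [h.bar_sub, h.bar_bar, neg_sub]) b
  have right := swap_skew (t := b - bar b) (by rw [h.bar_sub, h.bar_bar, neg_sub]) a
  simp only [associator_apply, mul_sub, sub_mul] at left right ⊢
  linear_combination (norm := module) right - left

theorem strTrip_mul_add_mul_strTrip {s : A} (hs : bar s = -s) (a b z : A) :
    strTrip bar b a (s * z) + s * strTrip bar a b z = strPsi bar (s * a) b * z := by
  rw [h.strTrip_skew_mul_add hs]
  congr 1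
  have symm := h.associator_add_swap_bar a b s
  have transfer : associator b (bar a) s = associator s b (bar a) := by
    rw [h.associator_skew_right hs, h.associator_skew_left hs]
  simp only [strTrip, strPsi, h.bar_mul, hs, one_mul, mul_one, mul_neg, mul_add, mul_sub]
  simp only [associator_apply] at symm transfer
  linear_combination (norm := module) symm + transfer

end

/-- The space `S` of skew elements. -/
def skew (h : IsStructurable k A bar) : Submodule k A where
  carrier := {a | bar a = -a}
  add_mem' {a b} ha hb := by
    rw [Set.mem_ofPred_eq] at *
    rw [h.bar_add, ha, hb, neg_add]
  zero_mem' := by rw [Set.mem_ofPred_eq, h.bar_zero, neg_zero]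
  smul_mem' c a ha := by
    rw [Set.mem_ofPred_eq] at *
    rw [h.bar_smul, ha, smul_neg]

variable [SMulCommClass k A A] [IsScalarTower k A A]

/-- The triple product `{x,y,z}` as a trilinear map. -/
def tripleHom (h : IsStructurable k A bar) : A →ₗ[k] A →ₗ[k] Module.End k A :=
  LinearMap.mk₂ k
    (fun x y =>
      { toFun := strTrip bar x y
        map_add' := strTrip_add_right bar x y
        map_smul' := fun c a => by
          simp only [strTrip, mul_smul_comm, smul_mul_assoc, smul_sub, smul_add,
            RingHom.id_apply] })
    (fun a b c => by
      ext z
      simp only [strTrip, h.bar_add, mul_add, add_mul, LinearMap.coe_mk, AddHom.coe_mk,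
        LinearMap.add_apply]
      abel)
    (fun c a b => by
      ext z
      simp only [strTrip, h.bar_smul, mul_smul_comm, smul_mul_assoc, smul_sub, smul_add,
        LinearMap.coe_mk, AddHom.coe_mk, LinearMap.smul_apply])
    (fun a b c => by
      ext z
      simp only [strTrip, h.bar_add, mul_add, add_mul, LinearMap.coe_mk, AddHom.coe_mk,
        LinearMap.add_apply]
      abel)
    (fun c a b => by
      ext z
      simp only [strTrip, h.bar_smul, mul_smul_comm, smul_mul_assoc, smul_sub, smul_add,
        LinearMap.coe_mk, AddHom.coe_mk, LinearMap.smul_apply])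

/-- The alternating map `ψ(x,y)` with values in the skew elements. -/
def psiHom (h : IsStructurable k A bar) : A →ₗ[k] A →ₗ[k] h.skew :=
  LinearMap.mk₂ k
    (fun x y => ⟨strPsi bar x y, by
      change bar (strPsi bar x y) = -strPsi bar x y
      simp only [strPsi, h.bar_sub, h.bar_mul, h.bar_bar, neg_sub]⟩)
    (fun a b c => by
      ext
      simp only [strPsi, h.bar_add, mul_add, add_mul, Submodule.coe_add]
      abel)
    (fun c a b => by
      ext
      simp only [strPsi, h.bar_smul, mul_smul_comm, smul_mul_assoc, smul_sub, Submodule.coe_smul])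
    (fun a b c => by
      ext
      simp only [strPsi, h.bar_add, mul_add, add_mul, Submodule.coe_add]
      abel)
    (fun c a b => by
      ext
      simp only [strPsi, h.bar_smul, mul_smul_comm, smul_mul_assoc, smul_sub, Submodule.coe_smul])

/-- The Kantor triple system of a structurable algebra. -/
def kantor [NeZero (2 : k)] [NeZero (3 : k)] (h : IsStructurable k A bar) :
    KantorTripleSystem k A h.skew where
  V := h.tripleHom
  L := (LinearMap.mul k A).domRestrict h.skew
  ψ := h.psiHom
  V_mul_V_sub x y z w := LinearMap.ext (h.strTrip_strTrip_sub x y z w)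
  V_sub_V_swap := strTrip_sub_strTrip_swap bar
  V_mul_L_add_L_mul_V σ a b := LinearMap.ext (h.strTrip_mul_add_mul_strTrip σ.2 a b)
  exists_ψ_eq σ := ⟨(2 : k)⁻¹ • (σ : A), 1, Subtype.ext <| by
    have skew_half : bar ((2 : k)⁻¹ • (σ : A)) = -((2 : k)⁻¹ • (σ : A)) :=
      (h.skew.smul_mem _ σ.2 : _)
    change strPsi bar _ 1 = _
    rw [h.strPsi_skew_one skew_half, ← two_smul k, smul_inv_smul₀ two_ne_zero]⟩
  L_injective σ τ hστ := Subtype.ext <| by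
    have at_one : (σ : A) * 1 = τ * 1 := LinearMap.congr_fun hστ 1
    rwa [mul_one, mul_one] at at_one
  eq_zero_of_V_right b hb := by
    have at_one : strTrip bar 1 b 1 = 0 := LinearMap.congr_fun (hb 1) 1
    rw [h.strTrip_one_right_one] at at_one
    have bar_at_one := congrArg bar at_one
    rw [h.bar_sub, h.bar_add, h.bar_bar, h.bar_zero] at bar_at_one
    refine (smul_eq_zero_iff_right (three_ne_zero (α := k))).mp ?_
    linear_combination (norm := module) at_one + (2 : k) • bar_at_one

section

variable [NeZero (2 : k)] [NeZero (3 : k)] (h : IsStructurable k A bar)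
include h

theorem mul_mul_eq_neg {s r : A} (hs : bar s = -s) (hr : bar r = -r)
    (hsr : ∀ z, strTrip bar s r z = z) (z : A) : s * (r * z) = -z := by
  have swap (z : A) : strTrip bar s (r * 1) z - strTrip bar 1 (r * s) z =
      -(strPsi bar s 1 * (r * z)) :=
    LinearMap.congr_fun (h.kantor.V_L_right_sub ⟨r, hr⟩ s 1) z
  simp only [mul_one, hsr, h.strPsi_skew_one hs] at swap
  have rs : r * s = -1 := by
    have at_one := swap 1
    rw [h.strTrip_one_right_one, h.bar_mul, hs, hr] at at_one
    simp only [neg_mul, mul_neg, neg_neg, add_mul, mul_one] at at_one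
    linear_combination (norm := module) at_one
  have at_z := swap z
  simp only [rs, strTrip, h.bar_neg, h.bar_one, one_mul, mul_one, mul_neg, neg_mul, add_mul]
    at at_z
  refine (smul_right_inj (two_ne_zero (α := k))).mp ?_
  linear_combination (norm := module) at_z

theorem isConjInverse {x y : A} (hxy : ∀ z, strTrip bar x y z = z) :
    h.kantor.IsConjInverse x y := LinearMap.ext hxy

theorem isSkewInverse {s r : h.skew} (hsr : ∀ z, strTrip bar s r z = z) :
    h.kantor.IsSkewInverse s r :=
  ⟨LinearMap.ext (h.mul_mul_eq_neg s.2 r.2 hsr),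
    LinearMap.ext (h.mul_mul_eq_neg r.2 s.2 (LinearMap.congr_fun (h.isConjInverse hsr).symm))⟩

theorem add_mul_ne_zero {x y s : A} (hxy : ∀ z, strTrip bar x y z = z) (hs₀ : s ≠ 0)
    (hs : bar s = -s) : x + s * y ≠ 0 :=
  (h.isConjInverse hxy).add_L_ne_zero (s := ⟨s, hs⟩) fun hzero => hs₀ (congrArg Subtype.val hzero)

end

end IsStructurable

theorem stmt8_general {k : Type*} [Field k] {A : Type*} [NonAssocRing A] [Module k A]
    [SMulCommClass k A A] [IsScalarTower k A A] (h2 : (2 : k) ≠ 0) (h3 : (3 : k) ≠ 0)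
    (bar : A → A) (hstr : IsStructurable k A bar)
    (x xhat : A) (hxhat : ∀ z : A, strTrip bar x xhat z = z)
    (s : A) (hs0 : s ≠ 0) (hsS : bar s = -s)
    (hinv : ∃ w, ∀ z : A, strTrip bar (x + s * xhat) w z = z)
    (shat : A) (hshatS : bar shat = -shat)
    (hshat : ∀ z : A, strTrip bar s shat z = z) :
    s + strQ k bar x shat ≠ 0 ∧
    x - s * (strQ k bar xhat s * x) ≠ 0 ∧
    ∀ t u : A, bar t = -t →
      (∀ z : A, strTrip bar (s + strQ k bar x shat) t z = z) →
      (∀ z : A, strTrip bar (x - s * (strQ k bar xhat s * x)) u z = z) →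
      ((∀ z : A, strTrip bar x u z = z + s * (t * z)) ∧
        s * u = -((3 : k)⁻¹ • strTrip bar x (t * x) x) ∧
        strPsi bar x (s * (t * x)) = 0) := by
  have : NeZero (2 : k) := ⟨h2⟩
  have : NeZero (3 : k) := ⟨h3⟩
  lift s to hstr.skew using hsS
  lift shat to hstr.skew using hshatS
  have hx := hstr.isConjInverse hxhat
  have hs := hstr.isSkewInverse hshat
  obtain ⟨w, hw⟩ := hinv
  have hsum := hx.add_q_ne_zero hs (fun hs' => hs0 (congrArg Subtype.val hs'))
    (hstr.isConjInverse hw)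
  refine ⟨fun hsum' => hsum (Subtype.ext hsum'), hx.sub_L_L_q_ne_zero hs hsum,
    fun t u htS ht hu => ?_⟩
  lift t to hstr.skew using htS
  obtain ⟨V_eq, mul_eq, ψ_eq⟩ :=
    hx.one_invertibility hs (hstr.isSkewInverse ht) (hstr.isConjInverse hu)
  exact ⟨LinearMap.congr_fun V_eq, mul_eq, congrArg Subtype.val ψ_eq⟩

/-- Let `A` be a structurable division algebra over a field `k` with
`char k ≠ 2, 3`, let `0 ≠ x ∈ A` with conjugate inverse `x̂`, and let `0 ≠ s ∈ S` with
conjugate inverse `ŝ ∈ S`.  Then `s + q_x(ŝ) ≠ 0` and `x − s·(q_{x̂}(s)·x) ≠ 0`.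
Moreover, if `t ∈ S` is the conjugate inverse of `s + q_x(ŝ)` and `u` is the conjugate
inverse of `x − s·(q_{x̂}(s)·x)`, then `(u,t)` satisfies the one-invertibility system:
`V_{x,u} = id + L_s L_t`, `s·u = −(1/3)·U_x(t·x)` and `ψ(x, s·(t·x)) = 0`. -/
theorem stmt8 {k : Type*} [Field k] {A : Type*} [NonAssocRing A] [Module k A]
    [SMulCommClass k A A] [IsScalarTower k A A] [FiniteDimensional k A] [Nontrivial A]
    (h2 : (2 : k) ≠ 0) (h3 : (3 : k) ≠ 0)
    (bar : A → A) (hstr : IsStructurable k A bar) (hdiv : IsConjDivision bar)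
    (x : A) (hx0 : x ≠ 0) (xhat : A) (hxhat : ∀ z : A, strTrip bar x xhat z = z)
    (s : A) (hs0 : s ≠ 0) (hsS : bar s = -s)
    (shat : A) (hshatS : bar shat = -shat)
    (hshat : ∀ z : A, strTrip bar s shat z = z) :
    s + strQ k bar x shat ≠ 0 ∧
    x - s * (strQ k bar xhat s * x) ≠ 0 ∧
    ∀ t u : A, bar t = -t →
      (∀ z : A, strTrip bar (s + strQ k bar x shat) t z = z) →
      (∀ z : A, strTrip bar (x - s * (strQ k bar xhat s * x)) u z = z) →
      ((∀ z : A, strTrip bar x u z = z + s * (t * z)) ∧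
        s * u = -((3 : k)⁻¹ • strTrip bar x (t * x) x) ∧
        strPsi bar x (s * (t * x)) = 0) := by
  have : NeZero (2 : k) := ⟨h2⟩
  have : NeZero (3 : k) := ⟨h3⟩
  exact stmt8_general h2 h3 bar hstr x xhat hxhat s hs0 hsS
    (hdiv _ (hstr.add_mul_ne_zero hxhat hs0 hsS)) shat hshatS hshat
end
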